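/- arXiv:1509.01317 — 9 statements merged into one kernel-verified Lean document; each statement's English description precedes it below -/
import Mathlib

section
/- (First inequality of Lemma 1.1.) For every ξ ≥ 0 one has K(ξ) ≥ 2W₁/(ξ^a + a_N^a), where a = α_N/(α_N+1) and W₁ = a_N^a/(2·N·M). -/
/-!
Let `b * t ^ A` be the top term of `g t`, let `a = A / (A + 1)` and `ξ = t * g t`. Each of the
`N + 1` powers in `g t` is at most `1 + t ^ A`, and the constant term and the top term together
cost only one such bound, so `g t ≤ N * M * (1 + t ^ A)`. Conversely the top term alone gives
`b * t ^ (A + 1) ≤ ξ`, and raising this to the power `a` yields `b ^ a * t ^ A ≤ ξ ^ a`.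
Hence `b ^ a * g t ≤ N * M * (ξ ^ a + b ^ a)`.
-/

theorem rpow_le_one_add_rpow {t p q : ℝ} (ht : 0 ≤ t) (hp : 0 ≤ p) (hpq : p ≤ q) :
    t ^ p ≤ 1 + t ^ q := by
  rcases le_total t 1 with h | h
  · exact (Real.rpow_le_one ht h hp).trans (le_add_of_nonneg_right (Real.rpow_nonneg ht q))
  · exact (Real.rpow_le_rpow_of_exponent_le h hpq).trans (le_add_of_nonneg_left zero_le_one)

theorem rpow_mul_rpow_le_mul_rpow {b t A G : ℝ} (hb : 0 ≤ b) (ht : 0 ≤ t) (hA : 0 ≤ A)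
    (hG : b * t ^ A ≤ G) :
    b ^ (A / (A + 1)) * t ^ A ≤ (t * G) ^ (A / (A + 1)) := by
  have hA1 : A + 1 ≠ 0 := by positivity
  calc b ^ (A / (A + 1)) * t ^ A
      = b ^ (A / (A + 1)) * (t ^ (A + 1)) ^ (A / (A + 1)) := by
        rw [← Real.rpow_mul ht, mul_div_cancel₀ A hA1]
    _ = (b * t ^ (A + 1)) ^ (A / (A + 1)) := (Real.mul_rpow hb (by positivity)).symm
    _ = (t * (b * t ^ A)) ^ (A / (A + 1)) := by
        rw [Real.rpow_add_one' ht hA1, mul_left_comm t, mul_comm t]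
    _ ≤ (t * G) ^ (A / (A + 1)) := by gcongr

/-- The generalized polynomial `g(t) = ∑ a_j t ^ α_j` with real exponents, where the
coefficients `c` play the role of `a_j` and the terms are indexed by any finite set. -/
noncomputable def genPoly {ι : Type*} (S : Finset ι) (c α : ι → ℝ) (t : ℝ) : ℝ :=
  ∑ j ∈ S, c j * t ^ α j

section GenPoly

variable {ι : Type*} {S : Finset ι} {c α : ι → ℝ} {t M : ℝ} {o m : ι} {N : ℕ}

theorem term_le_genPoly (hc : ∀ j ∈ S, 0 ≤ c j) (ht : 0 ≤ t) (hm : m ∈ S) :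
    c m * t ^ α m ≤ genPoly S c α t :=
  Finset.single_le_sum (f := fun j ↦ c j * t ^ α j)
    (fun j hj ↦ mul_nonneg (hc j hj) (Real.rpow_nonneg ht _)) hm

theorem genPoly_pos (hc : ∀ j ∈ S, 0 ≤ c j) (ht : 0 ≤ t) (ho : o ∈ S) (hαo : α o = 0)
    (hco : 0 < c o) : 0 < genPoly S c α t :=
  calc 0 < c o * t ^ α o := by rwa [hαo, Real.rpow_zero, mul_one]
    _ ≤ genPoly S c α t := term_le_genPoly hc ht ho

theorem genPoly_le_mul_one_add_rpow (hN : S.card = N + 1) (hM : 0 ≤ M)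
    (hcM : ∀ j ∈ S, c j ≤ M) (ht : 0 ≤ t)
    (ho : o ∈ S) (hm : m ∈ S) (hom : o ≠ m) (hαo : α o = 0)
    (hα : ∀ j ∈ S, α j ∈ Set.Icc 0 (α m)) :
    genPoly S c α t ≤ N * M * (1 + t ^ α m) := by
  classical
  have hm' : m ∈ S.erase o := Finset.mem_erase.2 ⟨hom.symm, hm⟩
  have hmiddle : ∑ j ∈ (S.erase o).erase m, c j * t ^ α j
      ≤ ((S.erase o).erase m).card • (M * (1 + t ^ α m)) := by
    refine Finset.sum_le_card_nsmul _ _ _ fun j hj ↦ ?_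
    have hjS : j ∈ S := Finset.mem_of_mem_erase (Finset.mem_of_mem_erase hj)
    exact mul_le_mul (hcM j hjS) (rpow_le_one_add_rpow ht (hα j hjS).1 (hα j hjS).2)
      (Real.rpow_nonneg ht _) hM
  have hcard : (((S.erase o).erase m).card : ℝ) = N - 1 := by
    rw [Finset.cast_card_erase_of_mem hm', Finset.card_erase_of_mem ho, hN, Nat.add_sub_cancel]
  calc genPoly S c α t
      = c o + (c m * t ^ α m + ∑ j ∈ (S.erase o).erase m, c j * t ^ α j) := by
        rw [Finset.add_sum_erase _ (fun j ↦ c j * t ^ α j) hm', genPoly,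
          ← Finset.add_sum_erase _ _ ho, hαo, Real.rpow_zero, mul_one]
    _ ≤ M + (M * t ^ α m + ((S.erase o).erase m).card • (M * (1 + t ^ α m))) := by
        gcongr
        exacts [hcM o ho, hcM m hm]
    _ = N * M * (1 + t ^ α m) := by
        rw [nsmul_eq_mul, hcard]
        ring

theorem stmt5_general (hN : S.card = N + 1) (hc : ∀ j ∈ S, 0 ≤ c j) (hcM : ∀ j ∈ S, c j ≤ M)
    (ho : o ∈ S) (hm : m ∈ S) (hom : o ≠ m) (hαo : α o = 0)
    (hα : ∀ j ∈ S, α j ∈ Set.Icc 0 (α m)) (hco : 0 < c o) (hcm : 0 < c m)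
    {a : ℝ} (ha : a = α m / (α m + 1)) {W₁ : ℝ} (hW₁ : W₁ = c m ^ a / (2 * N * M))
    {ξ : ℝ} (ht : 0 ≤ t) (hξ : t * genPoly S c α t = ξ) :
    2 * W₁ / (ξ ^ a + c m ^ a) ≤ 1 / genPoly S c α t := by
  have hM : 0 < M := hco.trans_le (hcM o ho)
  have hNpos : 0 < N := by
    have hcard : 1 < S.card := Finset.one_lt_card.2 ⟨o, ho, m, hm, hom⟩
    omega
  have hg : 0 < genPoly S c α t := genPoly_pos hc ht ho hαo hco
  have hξ0 : 0 ≤ ξ := hξ ▸ mul_nonneg ht hg.le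
  have hroot : c m ^ a * t ^ α m ≤ ξ ^ a := by
    rw [ha, ← hξ]
    exact rpow_mul_rpow_le_mul_rpow hcm.le ht (hα m hm).1 (term_le_genPoly hc ht hm)
  have hW : 2 * W₁ = c m ^ a / (N * M) := by
    rw [hW₁]
    field_simp
  rw [hW, div_div, div_le_div_iff₀ (by positivity) hg, one_mul]
  calc c m ^ a * genPoly S c α t
      ≤ c m ^ a * (N * M * (1 + t ^ α m)) := by
        gcongr
        exact genPoly_le_mul_one_add_rpow hN hM.le hcM ht ho hm hom hαo hα
    _ = N * M * (c m ^ a * t ^ α m + c m ^ a) := by ring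
    _ ≤ N * M * (ξ ^ a + c m ^ a) := by gcongr

end GenPoly

/-- First inequality of Lemma 1.1: `K(ξ) ≥ 2W₁/(ξ^a + a_N^a)` for all `ξ ≥ 0`. -/
theorem stmt5
    (N : ℕ) (hN : 1 ≤ N)
    (α : ℕ → ℝ) (hα0 : α 0 = 0) (hαmono : ∀ i < N, α i < α (i + 1))
    (aa : ℕ → ℝ) (ha0 : 0 < aa 0) (haN : 0 < aa N) (hann : ∀ j ≤ N, 0 ≤ aa j)
    (g : ℝ → ℝ)
    (hg : ∀ t : ℝ, 0 ≤ t → g t = ∑ j ∈ Finset.range (N + 1), aa j * t ^ α j)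
    (s : ℝ → ℝ) (hs : ∀ ξ : ℝ, 0 ≤ ξ → 0 ≤ s ξ ∧ s ξ * g (s ξ) = ξ)
    (K : ℝ → ℝ) (hK : ∀ ξ : ℝ, 0 ≤ ξ → K ξ = 1 / g (s ξ))
    (M : ℝ) (hMub : ∀ j ≤ N, aa j ≤ M) (hMmem : ∃ j ≤ N, aa j = M)
    (a : ℝ) (ha : a = α N / (α N + 1))
    (W₁ : ℝ) (hW₁ : W₁ = aa N ^ a / (2 * (N : ℝ) * M)) :
    ∀ ξ : ℝ, 0 ≤ ξ → 2 * W₁ / (ξ ^ a + aa N ^ a) ≤ K ξ := by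
  intro ξ hξ
  have hα : Set.MapsTo α (Set.Icc 0 N) (Set.Icc (α 0) (α N)) :=
    ((strictMonoOn_Iic_of_lt_succ hαmono).monotoneOn.mono Set.Icc_subset_Iic_self).mapsTo_Icc
  simp only [← Finset.mem_range_succ_iff] at hann hMub
  obtain ⟨ht, hξt⟩ := hs ξ hξ
  rw [hg _ ht] at hξt
  rw [hK ξ hξ, hg _ ht]
  exact stmt5_general (Finset.card_range (N + 1)) hann hMub (Finset.mem_range.2 N.succ_pos)
    (Finset.self_mem_range_succ N) (Nat.ne_of_lt hN) hα0
    (fun j hj ↦ hα0 ▸ hα ⟨j.zero_le, Finset.mem_range_succ_iff.1 hj⟩) ha0 haN ha hW₁ ht hξt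
end

section
/- (Second inequality of Lemma 1.1.) For every ξ > 0 one has K(ξ) ≤ W₂/ξ^a, where a = α_N/(α_N+1) and W₂ = N·M/(m·a_N^{1−a}). -/
/-!
Multiplying the `(1 - a)`-th power of `a_N * s ^ α_N ≤ g s` by `(g s) ^ a`, where
`α_N * (1 - a) = a`, turns the powers of `s` and `g s` into `(s * g s) ^ a = ξ ^ a` and
gives `a_N ^ (1 - a) * ξ ^ a ≤ g s`. So `K ξ ≤ 1 / (a_N ^ (1 - a) * ξ ^ a)`, and the factor
`N * M / m` in `W₂` is at least one.
-/

theorem rpow_mul_mul_rpow_le_of_mul_rpow_le {c β s G : ℝ} (hβ : -1 < β) (hc : 0 ≤ c)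
    (hs : 0 ≤ s) (hle : c * s ^ β ≤ G) :
    c ^ (1 - β / (β + 1)) * (s * G) ^ (β / (β + 1)) ≤ G := by
  set a := β / (β + 1) with ha
  have hβ' : 0 < β + 1 := by linarith
  have h_one_sub : 1 - a = 1 / (β + 1) := by rw [ha]; field_simp; ring
  have h_one_sub_nonneg : 0 ≤ 1 - a := by rw [h_one_sub]; positivity
  have hβa : β * (1 - a) = a := by rw [h_one_sub, ha]; ring
  have hG : 0 ≤ G := le_trans (by positivity) hle
  calc c ^ (1 - a) * (s * G) ^ a
      = (c * s ^ β) ^ (1 - a) * G ^ a := by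
        rw [Real.mul_rpow hs hG, Real.mul_rpow hc (by positivity), ← Real.rpow_mul hs, hβa,
          mul_assoc]
    _ ≤ G ^ (1 - a) * G ^ a := by gcongr
    _ = G := by rw [← Real.rpow_add' hG (by simp), sub_add_cancel, Real.rpow_one]

theorem mul_rpow_le_sum_mul_rpow {ι : Type*} {J : Finset ι} {c α : ι → ℝ} {k : ι} {t : ℝ}
    (hc : ∀ j ∈ J, 0 ≤ c j) (hk : k ∈ J) (ht : 0 ≤ t) :
    c k * t ^ α k ≤ ∑ j ∈ J, c j * t ^ α j :=
  Finset.single_le_sum (f := fun j ↦ c j * t ^ α j)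
    (fun j hj ↦ mul_nonneg (hc j hj) (Real.rpow_nonneg ht _)) hk

theorem inv_le_mul_div_min_mul {𝕜 : Type*} [Field 𝕜] [LinearOrder 𝕜] [IsStrictOrderedRing 𝕜]
    {b c M r x : 𝕜} (hb : 0 < b) (hc : 0 < c) (hcM : c ≤ M) (hr : 1 ≤ r) (hx : 0 ≤ x) :
    x⁻¹ ≤ r * M / (min b c * x) := by
  have hmin : 0 < min b c := lt_min hb hc
  have hmin_le : min b c ≤ r * M :=
    calc min b c ≤ M := (min_le_right b c).trans hcM
      _ ≤ r * M := le_mul_of_one_le_left (hc.le.trans hcM) hr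
  calc x⁻¹ ≤ r * M / min b c * x⁻¹ :=
        le_mul_of_one_le_left (inv_nonneg.mpr hx) ((one_le_div hmin).mpr hmin_le)
    _ = r * M / (min b c * x) := by rw [← div_eq_mul_inv, div_div]

theorem stmt6_general {ι : Type*} {J : Finset ι} {α c : ι → ℝ} {k : ι} (hk : k ∈ J)
    (hαk : -1 < α k) (hck : 0 < c k) (hc : ∀ j ∈ J, 0 ≤ c j)
    {g : ℝ → ℝ} (hg : ∀ t, 0 < t → g t = ∑ j ∈ J, c j * t ^ α j)
    {s : ℝ → ℝ} (hs : ∀ ξ, 0 < ξ → 0 ≤ s ξ ∧ s ξ * g (s ξ) = ξ)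
    {K : ℝ → ℝ} (hK : ∀ ξ, 0 < ξ → K ξ = 1 / g (s ξ))
    {a : ℝ} (ha : a = α k / (α k + 1)) {ξ : ℝ} (hξ : 0 < ξ) :
    K ξ ≤ (c k ^ (1 - a))⁻¹ / ξ ^ a := by
  obtain ⟨hs_nonneg, hsg⟩ := hs ξ hξ
  have hs_pos : 0 < s ξ := hs_nonneg.lt_of_ne' (left_ne_zero_of_mul (hsg.trans_ne hξ.ne'))
  have hterm : c k * s ξ ^ α k ≤ g (s ξ) :=
    (mul_rpow_le_sum_mul_rpow hc hk hs_nonneg).trans_eq (hg _ hs_pos).symm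
  have hg_ge : c k ^ (1 - a) * ξ ^ a ≤ g (s ξ) := by
    simpa only [ha, hsg] using rpow_mul_mul_rpow_le_of_mul_rpow_le hαk hck.le hs_nonneg hterm
  calc K ξ = 1 / g (s ξ) := hK ξ hξ
    _ ≤ 1 / (c k ^ (1 - a) * ξ ^ a) := one_div_le_one_div_of_le (by positivity) hg_ge
    _ = (c k ^ (1 - a))⁻¹ / ξ ^ a := by rw [← div_div, one_div]

/-- Second inequality of Lemma 1.1: `K(ξ) ≤ W₂/ξ^a` for all `ξ > 0`. -/
theorem stmt6
    (N : ℕ) (hN : 1 ≤ N)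
    (α : ℕ → ℝ) (hα0 : α 0 = 0) (hαmono : ∀ i < N, α i < α (i + 1))
    (aa : ℕ → ℝ) (ha0 : 0 < aa 0) (haN : 0 < aa N) (hann : ∀ j ≤ N, 0 ≤ aa j)
    (g : ℝ → ℝ)
    (hg : ∀ t : ℝ, 0 ≤ t → g t = ∑ j ∈ Finset.range (N + 1), aa j * t ^ α j)
    (s : ℝ → ℝ) (hs : ∀ ξ : ℝ, 0 ≤ ξ → 0 ≤ s ξ ∧ s ξ * g (s ξ) = ξ)
    (K : ℝ → ℝ) (hK : ∀ ξ : ℝ, 0 ≤ ξ → K ξ = 1 / g (s ξ))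
    (M : ℝ) (hMub : ∀ j ≤ N, aa j ≤ M) (hMmem : ∃ j ≤ N, aa j = M)
    (a : ℝ) (ha : a = α N / (α N + 1))
    (W₂ : ℝ) (hW₂ : W₂ = (N : ℝ) * M / (min (aa 0) (aa N) * aa N ^ (1 - a))) :
    ∀ ξ : ℝ, 0 < ξ → K ξ ≤ W₂ / ξ ^ a := by
  intro ξ hξ
  have hαN : 0 ≤ α N := hα0.symm.trans_le <|
    (strictMonoOn_Iic_of_lt_succ hαmono).monotoneOn N.zero_le Set.self_mem_Iic N.zero_le
  have hW₂_ge : (aa N ^ (1 - a))⁻¹ ≤ W₂ := hW₂ ▸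
    inv_le_mul_div_min_mul ha0 haN (hMub N le_rfl) (Nat.one_le_cast.mpr hN)
      (Real.rpow_nonneg haN.le _)
  calc K ξ ≤ (aa N ^ (1 - a))⁻¹ / ξ ^ a :=
        stmt6_general (Finset.self_mem_range_succ N) (by linarith) haN
          (fun j hj ↦ hann j (Finset.mem_range_succ_iff.mp hj)) (fun t ht ↦ hg t ht.le)
          (fun η hη ↦ hs η hη.le) (fun η hη ↦ hK η hη.le) ha hξ
    _ ≤ W₂ / ξ ^ a := by gcongr
end

section
/- (Inequality (1.12) of Lemma 1.1.) For every ξ ≥ 0 one has W₁·ξ^{2−a} − a_N/2 ≤ K(ξ)·ξ² ≤ W₂·ξ^{2−a}, where a = α_N/(α_N+1), W₁ = a_N^a/(2NM) and W₂ = NM/(m·a_N^{1−a}). -/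
/-!
Write `t = s(ξ)`, so that `ξ = t g(t)` and `K(ξ) ξ² = t ξ`; everything reduces to comparing `t` with
`ξ ^ (1 - a)`, where `1 - a = 1 / (α_N + 1)`. The upper bound only uses the top monomial:
`a_N t ^ (α_N + 1) ≤ ξ`. For the lower bound let `P = ∑ a_j`, so that `ξ ≤ P t` if `t ≤ 1` and
`ξ ≤ P t ^ (α_N + 1)` if `t ≥ 1`. When `ξ ≥ a_N`, both cases give `a_N ^ a ξ ^ (1 - a) ≤ P t`;
when `ξ ≤ a_N`, the term `a_N ^ a ξ ^ (2 - a)` is at most `a_N ^ 2`; dividing by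
`2 N M ≥ max P (2 a_N)` turns this into the subtracted constant `a_N / 2`.
-/

open Finset

section Exponent

variable {a b β t ξ A : ℝ}

lemma one_sub_eq_inv_add_one (hβ : 0 ≤ β) (ha : a = β / (β + 1)) : 1 - a = (β + 1)⁻¹ := by
  rw [ha]
  field_simp
  ring

lemma one_sub_pos_of_eq_div_add_one (hβ : 0 ≤ β) (ha : a = β / (β + 1)) : 0 < 1 - a := by
  rw [one_sub_eq_inv_add_one hβ ha]
  positivity

lemma mul_mul_rpow_rpow_one_sub (hβ : 0 ≤ β) (ha : a = β / (β + 1)) (hb : 0 ≤ b) (ht : 0 ≤ t) :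
    (b * (t * t ^ β)) ^ (1 - a) = b ^ (1 - a) * t := by
  have ht_mul : t * t ^ β = t ^ (β + 1) := by
    rw [Real.rpow_add_one' ht (by positivity), mul_comm]
  rw [Real.mul_rpow hb (by positivity), ht_mul, one_sub_eq_inv_add_one hβ ha,
    Real.rpow_rpow_inv ht (by positivity)]

lemma rpow_mul_rpow_one_sub (hb : 0 < b) : b ^ a * b ^ (1 - a) = b := by
  rw [← Real.rpow_add hb, add_sub_cancel, Real.rpow_one]

lemma rpow_two_sub (hξ : 0 ≤ ξ) (ha : a ≠ 2) : ξ ^ (2 - a) = ξ ^ (1 - a) * ξ := by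
  have h_exp : 1 - a + 1 = 2 - a := by ring
  rw [← Real.rpow_add_one' hξ (h_exp ▸ sub_ne_zero.2 ha.symm), h_exp]

lemma rpow_mul_rpow_two_sub_le_sq (hA : 0 < A) (hξ : 0 ≤ ξ) (hξA : ξ ≤ A) (ha : a ≤ 2) :
    A ^ a * ξ ^ (2 - a) ≤ A ^ 2 :=
  calc A ^ a * ξ ^ (2 - a) ≤ A ^ a * A ^ (2 - a) := by gcongr
    _ = A ^ 2 := by rw [← Real.rpow_add hA, add_sub_cancel, Real.rpow_two]

end Exponent

/-- The generalized polynomial `∑ j ∈ J, c j * t ^ α j` with real exponents, the function `g` of the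
theorem. The index set is an arbitrary finite set and the exponents need not be sorted. Since
`0 ^ 0 = 1`, a term with `α j = 0` contributes `c j` at `t = 0` too. -/
noncomputable def rpowSum {ι : Type*} (J : Finset ι) (c α : ι → ℝ) (t : ℝ) : ℝ :=
  ∑ j ∈ J, c j * t ^ α j

namespace rpowSum

variable {ι : Type*} {J : Finset ι} {c α : ι → ℝ} {i n : ι} {a t ξ β : ℝ}

lemma term_le (hc : ∀ j ∈ J, 0 ≤ c j) (hi : i ∈ J) (ht : 0 ≤ t) :
    c i * t ^ α i ≤ rpowSum J c α t :=
  single_le_sum (f := fun j ↦ c j * t ^ α j)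
    (fun j hj ↦ mul_nonneg (hc j hj) (Real.rpow_nonneg ht _)) hi

lemma pos (hc : ∀ j ∈ J, 0 ≤ c j) (hi : i ∈ J) (hαi : α i = 0) (hci : 0 < c i) (ht : 0 ≤ t) :
    0 < rpowSum J c α t :=
  calc 0 < c i * t ^ α i := by rwa [hαi, Real.rpow_zero, mul_one]
    _ ≤ rpowSum J c α t := term_le hc hi ht

lemma nonneg (hc : ∀ j ∈ J, 0 ≤ c j) (ht : 0 ≤ t) : 0 ≤ rpowSum J c α t :=
  sum_nonneg fun j hj ↦ mul_nonneg (hc j hj) (Real.rpow_nonneg ht _)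

lemma le_sum_of_le_one (hc : ∀ j ∈ J, 0 ≤ c j) (hα : ∀ j ∈ J, 0 ≤ α j) (ht : 0 ≤ t)
    (ht1 : t ≤ 1) : rpowSum J c α t ≤ ∑ j ∈ J, c j :=
  sum_le_sum fun j hj ↦
    mul_le_of_le_one_right (hc j hj) (Real.rpow_le_one ht ht1 (hα j hj))

lemma le_sum_mul_rpow_of_one_le (hc : ∀ j ∈ J, 0 ≤ c j) (hα : ∀ j ∈ J, α j ≤ β) (ht : 1 ≤ t) :
    rpowSum J c α t ≤ (∑ j ∈ J, c j) * t ^ β := by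
  rw [sum_mul]
  exact sum_le_sum fun j hj ↦
    mul_le_mul_of_nonneg_left (Real.rpow_le_rpow_of_exponent_le ht (hα j hj)) (hc j hj)

lemma rpow_one_sub_mul_le (hc : ∀ j ∈ J, 0 ≤ c j) (hn : n ∈ J) (hαn : 0 ≤ α n)
    (ha : a = α n / (α n + 1)) (ht : 0 ≤ t) (hξ : t * rpowSum J c α t = ξ) :
    c n ^ (1 - a) * t ≤ ξ ^ (1 - a) := by
  have h_top : c n * (t * t ^ α n) ≤ ξ :=
    calc c n * (t * t ^ α n) = t * (c n * t ^ α n) := by ring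
      _ ≤ t * rpowSum J c α t := mul_le_mul_of_nonneg_left (term_le hc hn ht) ht
      _ = ξ := hξ
  have hcn := hc n hn
  rw [← mul_mul_rpow_rpow_one_sub hαn ha hcn ht]
  exact Real.rpow_le_rpow (by positivity) h_top (one_sub_pos_of_eq_div_add_one hαn ha).le

lemma rpow_one_sub_mul_mul_le (hc : ∀ j ∈ J, 0 ≤ c j) (hn : n ∈ J) (hαn : 0 ≤ α n)
    (ha : a = α n / (α n + 1)) (ht : 0 ≤ t) (hξ : t * rpowSum J c α t = ξ) :
    c n ^ (1 - a) * (t * ξ) ≤ ξ ^ (2 - a) := by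
  have hξ0 : 0 ≤ ξ := hξ ▸ mul_nonneg ht (nonneg hc ht)
  have ha2 : a < 2 := by linarith [one_sub_pos_of_eq_div_add_one hαn ha]
  rw [rpow_two_sub hξ0 ha2.ne, ← mul_assoc]
  exact mul_le_mul_of_nonneg_right (rpow_one_sub_mul_le hc hn hαn ha ht hξ) hξ0

lemma rpow_mul_rpow_one_sub_le (hc : ∀ j ∈ J, 0 ≤ c j) (hn : n ∈ J) (hcn : 0 < c n)
    (hα : ∀ j ∈ J, α j ∈ Set.Icc 0 (α n)) (ha : a = α n / (α n + 1)) (ht : 0 ≤ t)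
    (hξ : t * rpowSum J c α t = ξ) (hnξ : c n ≤ ξ) :
    c n ^ a * ξ ^ (1 - a) ≤ (∑ j ∈ J, c j) * t := by
  have hαn : 0 ≤ α n := (hα n hn).1
  have ha0 : 0 ≤ a := by rw [ha]; positivity
  have ha1 : 0 < 1 - a := one_sub_pos_of_eq_div_add_one hαn ha
  have hξ0 : 0 < ξ := hcn.trans_le hnξ
  set P := ∑ j ∈ J, c j
  have hcP : c n ≤ P := single_le_sum hc hn
  have hP : 0 < P := hcn.trans_le hcP
  rcases le_total t 1 with ht1 | ht1
  · calc c n ^ a * ξ ^ (1 - a) ≤ ξ ^ a * ξ ^ (1 - a) := by gcongr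
      _ = t * rpowSum J c α t := by rw [rpow_mul_rpow_one_sub hξ0, hξ]
      _ ≤ t * P := by gcongr; exact le_sum_of_le_one hc (fun j hj ↦ (hα j hj).1) ht ht1
      _ = P * t := mul_comm t P
  · have hξ_le : ξ ≤ P * (t * t ^ α n) :=
      calc ξ = t * rpowSum J c α t := hξ.symm
        _ ≤ t * (P * t ^ α n) := by
          gcongr; exact le_sum_mul_rpow_of_one_le hc (fun j hj ↦ (hα j hj).2) ht1
        _ = P * (t * t ^ α n) := by ring
    calc c n ^ a * ξ ^ (1 - a) ≤ P ^ a * (P * (t * t ^ α n)) ^ (1 - a) := by gcongr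
      _ = P * t := by
        rw [mul_mul_rpow_rpow_one_sub hαn ha hP.le ht, ← mul_assoc, rpow_mul_rpow_one_sub hP]

lemma rpow_mul_rpow_two_sub_le (hc : ∀ j ∈ J, 0 ≤ c j) (hn : n ∈ J) (hcn : 0 < c n)
    (hα : ∀ j ∈ J, α j ∈ Set.Icc 0 (α n)) (ha : a = α n / (α n + 1)) (ht : 0 ≤ t)
    (hξ : t * rpowSum J c α t = ξ) :
    c n ^ a * ξ ^ (2 - a) ≤ (∑ j ∈ J, c j) * (t * ξ) + c n ^ 2 := by
  have ha2 : a < 2 := by linarith [one_sub_pos_of_eq_div_add_one (hα n hn).1 ha]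
  have hξ0 : 0 ≤ ξ := hξ ▸ mul_nonneg ht (nonneg hc ht)
  rcases le_total ξ (c n) with hξn | hnξ
  · have h_nonneg : 0 ≤ (∑ j ∈ J, c j) * (t * ξ) :=
      mul_nonneg (sum_nonneg hc) (mul_nonneg ht hξ0)
    linarith [rpow_mul_rpow_two_sub_le_sq hcn hξ0 hξn ha2.le]
  · calc c n ^ a * ξ ^ (2 - a) = c n ^ a * ξ ^ (1 - a) * ξ := by
          rw [rpow_two_sub hξ0 ha2.ne, mul_assoc]
      _ ≤ (∑ j ∈ J, c j) * t * ξ :=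
          mul_le_mul_of_nonneg_right (rpow_mul_rpow_one_sub_le hc hn hcn hα ha ht hξ hnξ) hξ0
      _ ≤ (∑ j ∈ J, c j) * (t * ξ) + c n ^ 2 := by rw [mul_assoc]; linarith [sq_nonneg (c n)]

end rpowSum

theorem stmt7_general {ι : Type*} {J : Finset ι} {N : ℕ} (hN : 1 ≤ N) (hJ : #J = N + 1)
    {c α : ι → ℝ} {i n : ι} (hi : i ∈ J) (hn : n ∈ J) (hαi : α i = 0)
    (hα : ∀ j ∈ J, α j ∈ Set.Icc 0 (α n)) (hci : 0 < c i) (hcn : 0 < c n)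
    (hc : ∀ j ∈ J, 0 ≤ c j) {M : ℝ} (hM : ∀ j ∈ J, c j ≤ M) {a : ℝ}
    (ha : a = α n / (α n + 1)) {t ξ : ℝ} (ht : 0 ≤ t) (hξ : t * rpowSum J c α t = ξ) :
    c n ^ a / (2 * N * M) * ξ ^ (2 - a) - c n / 2 ≤ 1 / rpowSum J c α t * ξ ^ 2 ∧
      1 / rpowSum J c α t * ξ ^ 2 ≤ N * M / (min (c i) (c n) * c n ^ (1 - a)) * ξ ^ (2 - a) := by
  have hg : 0 < rpowSum J c α t := rpowSum.pos hc hi hαi hci ht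
  have hKξ : 1 / rpowSum J c α t * ξ ^ 2 = t * ξ := by rw [← hξ]; field_simp
  have hξ0 : 0 ≤ ξ := hξ ▸ mul_nonneg ht hg.le
  have hN' : (1 : ℝ) ≤ N := mod_cast hN
  have hM0 : 0 < M := hcn.trans_le (hM n hn)
  have hcNM : c n ≤ N * M := (hM n hn).trans (le_mul_of_one_le_left hM0.le hN')
  rw [hKξ]
  constructor
  · have h_sum : ∑ j ∈ J, c j ≤ 2 * N * M :=
      calc ∑ j ∈ J, c j ≤ #J • M := sum_le_card_nsmul J c M hM
        _ = (N + 1) * M := by rw [hJ, nsmul_eq_mul, Nat.cast_add_one]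
        _ ≤ 2 * N * M := by gcongr; linarith
    rw [sub_le_iff_le_add, div_mul_eq_mul_div, div_le_iff₀ (by positivity)]
    calc c n ^ a * ξ ^ (2 - a) ≤ (∑ j ∈ J, c j) * (t * ξ) + c n * c n := by
          rw [← sq]; exact rpowSum.rpow_mul_rpow_two_sub_le hc hn hcn hα ha ht hξ
      _ ≤ 2 * N * M * (t * ξ) + N * M * c n := by gcongr
      _ = (t * ξ + c n / 2) * (2 * N * M) := by ring
  · rw [div_mul_eq_mul_div, le_div_iff₀ (by positivity)]
    calc t * ξ * (min (c i) (c n) * c n ^ (1 - a))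
        = min (c i) (c n) * (c n ^ (1 - a) * (t * ξ)) := by ring
      _ ≤ N * M * ξ ^ (2 - a) := by
        gcongr
        · exact (min_le_right _ _).trans hcNM
        · exact rpowSum.rpow_one_sub_mul_mul_le hc hn (hα n hn).1 ha ht hξ

lemma mem_Icc_of_lt_succ {R : Type*} [Preorder R] {u : ℕ → R} {N j : ℕ}
    (hu : ∀ i < N, u i < u (i + 1)) (hj : j ∈ range (N + 1)) : u j ∈ Set.Icc (u 0) (u N) := by
  have hmono : MonotoneOn u (Set.Iic N) := (strictMonoOn_Iic_of_lt_succ hu).monotoneOn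
  have hjN : j ≤ N := mem_range_succ_iff.1 hj
  exact ⟨hmono N.zero_le hjN j.zero_le, hmono hjN Set.self_mem_Iic hjN⟩

/-- Inequality (1.12) of Lemma 1.1:
`W₁ ξ^(2-a) - a_N/2 ≤ K(ξ) ξ² ≤ W₂ ξ^(2-a)` for all `ξ ≥ 0`. -/
theorem stmt7
    (N : ℕ) (hN : 1 ≤ N)
    (α : ℕ → ℝ) (hα0 : α 0 = 0) (hαmono : ∀ i < N, α i < α (i + 1))
    (aa : ℕ → ℝ) (ha0 : 0 < aa 0) (haN : 0 < aa N) (hann : ∀ j ≤ N, 0 ≤ aa j)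
    (g : ℝ → ℝ)
    (hg : ∀ t : ℝ, 0 ≤ t → g t = ∑ j ∈ Finset.range (N + 1), aa j * t ^ α j)
    (s : ℝ → ℝ) (hs : ∀ ξ : ℝ, 0 ≤ ξ → 0 ≤ s ξ ∧ s ξ * g (s ξ) = ξ)
    (K : ℝ → ℝ) (hK : ∀ ξ : ℝ, 0 ≤ ξ → K ξ = 1 / g (s ξ))
    (M : ℝ) (hMub : ∀ j ≤ N, aa j ≤ M) (hMmem : ∃ j ≤ N, aa j = M)
    (a : ℝ) (ha : a = α N / (α N + 1))
    (W₁ : ℝ) (hW₁ : W₁ = aa N ^ a / (2 * (N : ℝ) * M))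
    (W₂ : ℝ) (hW₂ : W₂ = (N : ℝ) * M / (min (aa 0) (aa N) * aa N ^ (1 - a))) :
    ∀ ξ : ℝ, 0 ≤ ξ →
      W₁ * ξ ^ (2 - a) - aa N / 2 ≤ K ξ * ξ ^ 2 ∧ K ξ * ξ ^ 2 ≤ W₂ * ξ ^ (2 - a) := by
  intro ξ hξ
  have hgs : g (s ξ) = rpowSum (range (N + 1)) aa α (s ξ) := hg _ (hs ξ hξ).1
  simp only [← mem_range_succ_iff] at hann hMub
  rw [hK ξ hξ, hW₁, hW₂, hgs]
  exact stmt7_general hN (card_range _) (mem_range.2 N.succ_pos) (self_mem_range_succ N) hα0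
    (fun _ hj ↦ hα0 ▸ mem_Icc_of_lt_succ hαmono hj) ha0 haN hann hMub ha (hs ξ hξ).1
    (hgs ▸ (hs ξ hξ).2)
end

section
/- (Inequality (1.8).) The function K is differentiable on (0,∞) and satisfies −a·K(ξ) ≤ ξ·K'(ξ) ≤ 0 for every ξ > 0, where a = α_N/(α_N+1). Consequently, the function ξ ↦ ξ^a·K(ξ) is nondecreasing on (0,∞). -/
/-!
The elasticity `t f'(t) / f(t)` of a positive function obeys simple rules: that of `t ^ r * f` is
`r` plus that of `f`, and that of an inverse function is the reciprocal. A nonnegative combination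
of powers `t ^ α j` has elasticity between the least and the greatest exponent, so that of `g` lies
in `[0, p]` with `p = α_N`. Hence that of `t g(t)` lies in `[1, 1 + p]` and that of its inverse `s`
in `[1 / (1 + p), 1]`. Since `s(ξ) g(s(ξ)) = ξ` gives `K(ξ) = s(ξ) / ξ`, the elasticity of `K` lies
in `[-p / (p + 1), 0]`, and that of `ξ ^ a K(ξ)` is nonnegative.
-/

open Set Filter

theorem mem_Icc_of_le_add_one {β : Type*} [Preorder β] {f : ℕ → β} {n : ℕ}
    (hf : ∀ i < n, f i ≤ f (i + 1)) {j : ℕ} (hj : j ≤ n) : f j ∈ Icc (f 0) (f n) := by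
  have hmono : MonotoneOn f (Iic n) :=
    monotoneOn_of_le_add_one ordConnected_Iic fun i _ _ hi => hf i hi
  exact ⟨hmono n.zero_le hj j.zero_le, hmono hj self_mem_Iic hj⟩

theorem sum_mul_rpow_pos {ι : Type*} {S : Finset ι} {c α : ι → ℝ} (hc : ∀ i ∈ S, 0 ≤ c i)
    (hc' : ∃ i ∈ S, 0 < c i) {t : ℝ} (ht : 0 < t) : 0 < ∑ i ∈ S, c i * t ^ α i := by
  obtain ⟨i, hi, hci⟩ := hc'
  exact Finset.sum_pos' (fun j hj => mul_nonneg (hc j hj) (Real.rpow_nonneg ht.le _))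
    ⟨i, hi, mul_pos hci (Real.rpow_pos_of_pos ht _)⟩

theorem continuousOn_of_rightInvOn_strictMonoOn {X Y : Type*} [LinearOrder X] [TopologicalSpace X]
    [OrderTopology X] [DenselyOrdered X] [LinearOrder Y] [TopologicalSpace Y] [OrderTopology Y]
    {f : X → Y} {g : Y → X} {S : Set X} {T : Set Y} (hS : IsOpen S) (hT : IsOpen T)
    (hf : StrictMonoOn f S) (hfT : MapsTo f S T) (hgS : MapsTo g T S) (hgf : RightInvOn g f T) :
    ContinuousOn g T := by
  have hg_mono : StrictMonoOn g T := fun x hx y hy hxy =>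
    (hf.lt_iff_lt (hgS hx) (hgS hy)).1 <| by rwa [hgf hx, hgf hy]
  have hg_surj : SurjOn g T S :=
    (hf.injOn.rightInvOn_of_leftInvOn hgf hfT hgS).surjOn hfT
  exact fun y hy => (hg_mono.continuousAt_of_image_mem_nhds (hT.mem_nhds hy) <|
    mem_of_superset (hS.mem_nhds (hgS hy)) hg_surj).continuousWithinAt

/-- The elasticity `t f'(t) / f(t)` of `f` exists and lies in `[q, p]` at every `t > 0`. The
denominator is cleared so that `f` may vanish: this makes the condition stable under sums. -/
def HasElasticityIn (f : ℝ → ℝ) (q p : ℝ) : Prop :=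
  ∀ ⦃t : ℝ⦄, 0 < t → ∃ f', HasDerivAt f f' t ∧ t * f' ∈ Icc (q * f t) (p * f t)

theorem hasElasticityIn_const (c : ℝ) : HasElasticityIn (fun _ => c) 0 0 := fun t _ =>
  ⟨0, hasDerivAt_const t c, by simp⟩

namespace HasElasticityIn

variable {f : ℝ → ℝ} {q p : ℝ}

theorem differentiableAt (hf : HasElasticityIn f q p) {t : ℝ} (ht : 0 < t) :
    DifferentiableAt ℝ f t :=
  let ⟨_, hf', _⟩ := hf ht
  hf'.differentiableAt

theorem mul_deriv_mem_Icc (hf : HasElasticityIn f q p) {t : ℝ} (ht : 0 < t) :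
    t * deriv f t ∈ Icc (q * f t) (p * f t) := by
  obtain ⟨f', hf', hmem⟩ := hf ht
  rwa [hf'.deriv]

theorem congr {g : ℝ → ℝ} (hf : HasElasticityIn f q p) (hfg : EqOn g f (Ioi 0)) :
    HasElasticityIn g q p := by
  intro t ht
  obtain ⟨f', hf', hmem⟩ := hf ht
  exact ⟨f', hf'.congr_of_eventuallyEq (hfg.eventuallyEq_of_mem (Ioi_mem_nhds ht)),
    by rwa [hfg ht]⟩

theorem mono {q' p' : ℝ} (hf : HasElasticityIn f q p) (hf₀ : ∀ t, 0 < t → 0 ≤ f t)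
    (hq : q' ≤ q) (hp : p ≤ p') : HasElasticityIn f q' p' := by
  intro t ht
  obtain ⟨f', hf', hmem⟩ := hf ht
  exact ⟨f', hf', Icc_subset_Icc (mul_le_mul_of_nonneg_right hq (hf₀ t ht))
    (mul_le_mul_of_nonneg_right hp (hf₀ t ht)) hmem⟩

theorem sum {ι : Type*} {S : Finset ι} {F : ι → ℝ → ℝ}
    (hF : ∀ i ∈ S, HasElasticityIn (F i) q p) :
    HasElasticityIn (fun t => ∑ i ∈ S, F i t) q p := by
  intro t ht
  refine ⟨∑ i ∈ S, deriv (F i) t,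
    HasDerivAt.fun_sum fun i hi => ((hF i hi).differentiableAt ht).hasDerivAt, ?_, ?_⟩
  · simpa only [Finset.mul_sum] using
      Finset.sum_le_sum fun i hi => ((hF i hi).mul_deriv_mem_Icc ht).1
  · simpa only [Finset.mul_sum] using
      Finset.sum_le_sum fun i hi => ((hF i hi).mul_deriv_mem_Icc ht).2

theorem rpow_mul (hf : HasElasticityIn f q p) (r : ℝ) :
    HasElasticityIn (fun t => t ^ r * f t) (r + q) (r + p) := by
  intro t ht
  obtain ⟨f', hf', hq, hp⟩ := hf ht
  have hderiv : t * (r * t ^ (r - 1) * f t + t ^ r * f') = t ^ r * (r * f t + t * f') := by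
    rw [Real.rpow_sub_one ht.ne']
    field_simp
  refine ⟨_, (Real.hasDerivAt_rpow_const (Or.inl ht.ne')).mul hf', ?_, ?_⟩
  · calc (r + q) * (t ^ r * f t) = t ^ r * (r * f t + q * f t) := by ring
      _ ≤ t ^ r * (r * f t + t * f') := by gcongr
      _ = _ := hderiv.symm
  · calc _ = t ^ r * (r * f t + t * f') := hderiv
      _ ≤ t ^ r * (r * f t + p * f t) := by gcongr
      _ = (r + p) * (t ^ r * f t) := by ring

theorem monotoneOn (hf : HasElasticityIn f 0 p) : MonotoneOn f (Ioi 0) := by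
  refine monotoneOn_of_deriv_nonneg (convex_Ioi 0)
    (fun t ht => (hf.differentiableAt ht).continuousAt.continuousWithinAt)
    (fun t ht => (hf.differentiableAt (interior_subset ht)).differentiableWithinAt)
    fun t ht => ?_
  rw [interior_Ioi] at ht
  have hmul : 0 ≤ t * deriv f t := by simpa only [zero_mul] using (hf.mul_deriv_mem_Icc ht).1
  exact nonneg_of_mul_nonneg_right hmul ht

theorem deriv_pos (hf : HasElasticityIn f q p) (hq : 0 < q) {t : ℝ} (ht : 0 < t)
    (hft : 0 < f t) : 0 < deriv f t :=
  pos_of_mul_pos_right ((mul_pos hq hft).trans_le (hf.mul_deriv_mem_Icc ht).1) ht.le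

theorem strictMonoOn (hf : HasElasticityIn f q p) (hq : 0 < q) (hf₀ : ∀ t, 0 < t → 0 < f t) :
    StrictMonoOn f (Ioi 0) := by
  refine strictMonoOn_of_deriv_pos (convex_Ioi 0)
    (fun t ht => (hf.differentiableAt ht).continuousAt.continuousWithinAt) fun t ht => ?_
  rw [interior_Ioi] at ht
  exact hf.deriv_pos hq ht (hf₀ t ht)

theorem of_rightInvOn {s : ℝ → ℝ} (hf : HasElasticityIn f q p) (hq : 0 < q)
    (hf₀ : ∀ t, 0 < t → 0 < f t) (hs₀ : MapsTo s (Ioi 0) (Ioi 0))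
    (hs : RightInvOn s f (Ioi 0)) : HasElasticityIn s p⁻¹ q⁻¹ := by
  intro ξ hξ
  have ht : 0 < s ξ := hs₀ hξ
  have hfs : f (s ξ) = ξ := hs hξ
  have hd : 0 < deriv f (s ξ) := hf.deriv_pos hq ht (hf₀ _ ht)
  have hcont : ContinuousAt s ξ :=
    (continuousOn_of_rightInvOn_strictMonoOn isOpen_Ioi isOpen_Ioi (hf.strictMonoOn hq hf₀)
      hf₀ hs₀ hs).continuousAt (Ioi_mem_nhds hξ)
  have hderiv : HasDerivAt s (deriv f (s ξ))⁻¹ ξ :=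
    (hf.differentiableAt ht).hasDerivAt.of_local_left_inverse hcont hd.ne' <|
      eventually_of_mem (Ioi_mem_nhds hξ) hs
  obtain ⟨hlower, hupper⟩ := hf.mul_deriv_mem_Icc ht
  rw [hfs] at hlower hupper
  have hp : 0 < p := pos_of_mul_pos_left ((mul_pos ht hd).trans_le hupper) hξ.le
  refine ⟨_, hderiv, ?_, ?_⟩
  · rw [← div_eq_mul_inv, le_div_iff₀ hd, mul_assoc, inv_mul_le_iff₀ hp]
    exact hupper
  · rw [← div_eq_mul_inv, div_le_iff₀ hd, mul_assoc, le_inv_mul_iff₀ hq]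
    exact hlower

theorem one_div_comp {g s : ℝ → ℝ} (hg : HasElasticityIn g q p) (hq : -1 < q)
    (hg₀ : ∀ t, 0 < t → 0 < g t) (hs₀ : MapsTo s (Ioi 0) (Ioi 0))
    (hs : RightInvOn s (fun t => t * g t) (Ioi 0)) :
    HasElasticityIn (fun ξ => 1 / g (s ξ)) (-1 + (1 + p)⁻¹) (-1 + (1 + q)⁻¹) := by
  have hmul : HasElasticityIn (fun t => t * g t) (1 + q) (1 + p) := by
    simpa only [Real.rpow_one] using hg.rpow_mul 1
  have hinv : HasElasticityIn s (1 + p)⁻¹ (1 + q)⁻¹ :=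
    hmul.of_rightInvOn (by linarith) (fun t ht => mul_pos ht (hg₀ t ht)) hs₀ hs
  refine (hinv.rpow_mul (-1)).congr fun ξ hξ => ?_
  have hsg : s ξ * g (s ξ) = ξ := hs hξ
  have hgs : g (s ξ) ≠ 0 := (hg₀ _ (hs₀ hξ)).ne'
  calc 1 / g (s ξ) = s ξ / ξ := by rw [div_eq_div_iff hgs (ne_of_gt hξ), one_mul, hsg]
    _ = ξ ^ (-1 : ℝ) * s ξ := by rw [Real.rpow_neg_one, div_eq_inv_mul]

end HasElasticityIn

theorem hasElasticityIn_sum_mul_rpow {ι : Type*} {S : Finset ι} {c α : ι → ℝ} {q p : ℝ}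
    (hc : ∀ i ∈ S, 0 ≤ c i) (hα : ∀ i ∈ S, α i ∈ Icc q p) :
    HasElasticityIn (fun t => ∑ i ∈ S, c i * t ^ α i) q p := by
  refine HasElasticityIn.sum fun i hi => ?_
  have hpow : HasElasticityIn (fun t => c i * t ^ α i) (α i) (α i) := by
    simpa only [add_zero, mul_comm] using (hasElasticityIn_const (c i)).rpow_mul (α i)
  exact hpow.mono (fun t ht => mul_nonneg (hc i hi) (Real.rpow_nonneg ht.le _))
    (hα i hi).1 (hα i hi).2

theorem hasElasticityIn_sum_range_mul_rpow {c α : ℕ → ℝ} {n : ℕ} (hc : ∀ j ≤ n, 0 ≤ c j)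
    (hα : ∀ i < n, α i ≤ α (i + 1)) :
    HasElasticityIn (fun t => ∑ j ∈ Finset.range (n + 1), c j * t ^ α j) (α 0) (α n) :=
  hasElasticityIn_sum_mul_rpow (fun j hj => hc j (Finset.mem_range_succ_iff.1 hj))
    fun _ hj => mem_Icc_of_le_add_one hα (Finset.mem_range_succ_iff.1 hj)

theorem stmt8_general {g s K : ℝ → ℝ} {p : ℝ} (hg : HasElasticityIn g 0 p)
    (hg₀ : ∀ t, 0 < t → 0 < g t) (hs : ∀ ξ, 0 < ξ → 0 ≤ s ξ ∧ s ξ * g (s ξ) = ξ)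
    (hK : ∀ ξ, 0 < ξ → K ξ = 1 / g (s ξ)) :
    (∀ ξ, 0 < ξ → DifferentiableAt ℝ K ξ) ∧
    (∀ ξ, 0 < ξ → -(p / (p + 1) * K ξ) ≤ ξ * deriv K ξ ∧ ξ * deriv K ξ ≤ 0) ∧
    MonotoneOn (fun ξ => ξ ^ (p / (p + 1)) * K ξ) (Ioi 0) := by
  have hp : 0 ≤ p := by
    obtain ⟨_, _, hlower, hupper⟩ := hg one_pos
    exact le_of_mul_le_mul_right (hlower.trans hupper) (hg₀ 1 one_pos)
  have hs₀ : MapsTo s (Ioi 0) (Ioi 0) := fun ξ hξ =>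
    (hs ξ hξ).1.lt_of_ne' <| left_ne_zero_of_mul <| (hs ξ hξ).2.trans_ne (ne_of_gt hξ)
  have hbounds : -1 + (1 + p)⁻¹ = -(p / (p + 1)) ∧ -1 + (1 + (0 : ℝ))⁻¹ = 0 := by
    constructor <;> field_simp <;> ring
  have hKE : HasElasticityIn K (-(p / (p + 1))) 0 := by
    rw [← hbounds.1, ← hbounds.2]
    exact (hg.one_div_comp neg_one_lt_zero hg₀ hs₀ fun ξ hξ => (hs ξ hξ).2).congr hK
  refine ⟨fun ξ hξ => hKE.differentiableAt hξ, fun ξ hξ => ?_, ?_⟩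
  · simpa only [neg_mul, zero_mul, mem_Icc] using hKE.mul_deriv_mem_Icc hξ
  · have hmul := hKE.rpow_mul (p / (p + 1))
    rw [add_neg_cancel] at hmul
    exact hmul.monotoneOn

/-- Inequality (1.8): `K` is differentiable on `(0,∞)` and
`-a K(ξ) ≤ ξ K'(ξ) ≤ 0`; consequently `ξ ↦ ξ^a K(ξ)` is nondecreasing on `(0,∞)`. -/
theorem stmt8
    (N : ℕ) (hN : 1 ≤ N)
    (α : ℕ → ℝ) (hα0 : α 0 = 0) (hαmono : ∀ i < N, α i < α (i + 1))
    (aa : ℕ → ℝ) (ha0 : 0 < aa 0) (haN : 0 < aa N) (hann : ∀ j ≤ N, 0 ≤ aa j)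
    (g : ℝ → ℝ)
    (hg : ∀ t : ℝ, 0 ≤ t → g t = ∑ j ∈ Finset.range (N + 1), aa j * t ^ α j)
    (s : ℝ → ℝ) (hs : ∀ ξ : ℝ, 0 ≤ ξ → 0 ≤ s ξ ∧ s ξ * g (s ξ) = ξ)
    (K : ℝ → ℝ) (hK : ∀ ξ : ℝ, 0 ≤ ξ → K ξ = 1 / g (s ξ))
    (a : ℝ) (ha : a = α N / (α N + 1)) :
    (∀ ξ : ℝ, 0 < ξ → DifferentiableAt ℝ K ξ) ∧
    (∀ ξ : ℝ, 0 < ξ → -(a * K ξ) ≤ ξ * deriv K ξ ∧ ξ * deriv K ξ ≤ 0) ∧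
    MonotoneOn (fun ξ : ℝ => ξ ^ a * K ξ) (Set.Ioi 0) := by
  have hg₀ : ∀ t, 0 < t → 0 < g t := fun t ht => hg t ht.le ▸
    sum_mul_rpow_pos (fun j hj => hann j (Finset.mem_range_succ_iff.1 hj)) ⟨0, by simp, ha0⟩ ht
  have hgE : HasElasticityIn g 0 (α N) := hα0 ▸
    (hasElasticityIn_sum_range_mul_rpow hann fun i hi => (hαmono i hi).le).congr
      fun t ht => hg t (le_of_lt ht)
  exact ha ▸ stmt8_general hgE hg₀ (fun ξ hξ => hs ξ hξ.le) fun ξ hξ => hK ξ hξ.le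
end

section
/- (Monotonicity, Lemma 1.2.) Let d ≥ 1 be an integer. For all vectors y, y' ∈ ℝ^d one has (K(|y|)·y − K(|y'|)·y')·(y − y') ≥ (1−a)·K(max{|y|,|y'|})·|y − y'|², where a = α_N/(α_N+1), |·| is the Euclidean norm and · denotes the Euclidean inner product. -/
/-!
Write `c = (1 - a) K(max(|y|,|y'|))`. The difference of the two sides is the sum of
`(K(|y|)|y| - K(|y'|)|y'|)(|y| - |y'|) - c (|y| - |y'|)²` and
`(K(|y|) + K(|y'|) - 2c)(|y||y'| - y·y')`. The second term is nonnegative by Cauchy–Schwarz, since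
`K` is decreasing and `1 - a ≤ 1`. Nonnegativity of the first is the claim for the scalars `|y|` and
`|y'|`: in terms of the roots `u = s(|y|) = K(|y|)|y|` and `v = s(|y'|) = K(|y'|)|y'|` it says, for
`v ≤ u`, that `t ↦ t g(t)` grows by at most `(α_N + 1) g(u) (u - v)` from `v` to `u`, and each of
its monomials satisfies this bound by convexity.
-/

section GeneralizedPolynomial

/-- The tangent to the convex function `t ↦ t ^ (p + 1)` at `u` lies below its graph at `v`. -/
lemma mul_rpow_sub_mul_rpow_le {p u v : ℝ} (hp : 0 ≤ p) (hu : 0 ≤ u) (hv : 0 ≤ v) :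
    u * u ^ p - v * v ^ p ≤ (p + 1) * u ^ p * (u - v) := by
  have hp1 : 0 < p + 1 := by positivity
  have young := Real.geom_mean_le_arith_mean2_weighted (div_nonneg hp hp1.le)
    (one_div_nonneg.2 hp1.le) (Real.rpow_nonneg hu (p + 1)) (Real.rpow_nonneg hv (p + 1))
    (by rw [← add_div, div_self hp1.ne'])
  rw [← Real.rpow_mul hu, ← Real.rpow_mul hv, mul_div_cancel₀ _ hp1.ne',
    mul_one_div_cancel hp1.ne', Real.rpow_one, Real.rpow_add_one' hu hp1.ne',
    Real.rpow_add_one' hv hp1.ne'] at young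
  have scaled := mul_le_mul_of_nonneg_left young hp1.le
  field_simp at scaled
  linarith

variable {ι : Type*} {S : Finset ι} {c α : ι → ℝ}

lemma monotoneOn_sum_mul_rpow (hc : ∀ i ∈ S, 0 ≤ c i) (hα : ∀ i ∈ S, 0 ≤ α i) :
    MonotoneOn (fun t : ℝ => ∑ i ∈ S, c i * t ^ α i) (Set.Ici 0) :=
  fun _ hv _ _ hvu => Finset.sum_le_sum fun i hi =>
    mul_le_mul_of_nonneg_left (Real.rpow_le_rpow hv hvu (hα i hi)) (hc i hi)

lemma mul_sum_mul_rpow_sub_le {β u v : ℝ} (hc : ∀ i ∈ S, 0 ≤ c i)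
    (hα : ∀ i ∈ S, α i ∈ Set.Icc 0 β) (hv : 0 ≤ v) (hvu : v ≤ u) :
    u * ∑ i ∈ S, c i * u ^ α i - v * ∑ i ∈ S, c i * v ^ α i ≤
      (β + 1) * (∑ i ∈ S, c i * u ^ α i) * (u - v) := by
  have hu : 0 ≤ u := hv.trans hvu
  have monomial_le : ∀ i ∈ S, u * u ^ α i - v * v ^ α i ≤ (β + 1) * u ^ α i * (u - v) := by
    intro i hi
    obtain ⟨h0, hβ⟩ := hα i hi
    have := sub_nonneg.2 hvu
    calc u * u ^ α i - v * v ^ α i ≤ (α i + 1) * u ^ α i * (u - v) :=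
          mul_rpow_sub_mul_rpow_le h0 hu hv
      _ ≤ (β + 1) * u ^ α i * (u - v) := by gcongr
  rw [Finset.mul_sum, Finset.mul_sum, Finset.mul_sum, Finset.sum_mul, ← Finset.sum_sub_distrib]
  refine Finset.sum_le_sum fun i hi => ?_
  linarith [mul_le_mul_of_nonneg_left (monomial_le i hi) (hc i hi)]

end GeneralizedPolynomial

lemma mul_norm_sub_sq_le_inner_smul_sub_smul {E : Type*} [NormedAddCommGroup E]
    [InnerProductSpace ℝ E] {y z : E} {c k l : ℝ} (hc : y ≠ 0 → z ≠ 0 → 2 * c ≤ k + l)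
    (hradial : c * (‖y‖ - ‖z‖) ^ 2 ≤ (k * ‖y‖ - l * ‖z‖) * (‖y‖ - ‖z‖)) :
    c * ‖y - z‖ ^ 2 ≤ inner ℝ (k • y - l • z) (y - z) := by
  have angular : 0 ≤ (k + l - 2 * c) * (‖y‖ * ‖z‖ - inner ℝ y z) := by
    rcases eq_or_ne y 0 with rfl | hy
    · simp
    rcases eq_or_ne z 0 with rfl | hz
    · simp
    · exact mul_nonneg (sub_nonneg.2 (hc hy hz)) (sub_nonneg.2 (real_inner_le_norm y z))
  rw [norm_sub_sq_real]
  simp only [inner_sub_left, inner_sub_right, real_inner_smul_left, real_inner_self_eq_norm_sq,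
    real_inner_comm y z]
  linarith

lemma le_of_mul_apply_le_mul_apply {g : ℝ → ℝ} {u v : ℝ} (hg : MonotoneOn g (Set.Ici 0))
    (hu : 0 ≤ u) (hgu : 0 < g u) (h : v * g v ≤ u * g u) : v ≤ u := by
  by_contra! huv
  have hv : 0 ≤ v := hu.trans huv.le
  exact (mul_lt_mul huv (hg hu hv huv.le) hgu hv).not_ge h

/-- `K` is the conductivity of the nonlinear Darcy law with resistance `g`: `K(ξ) = 1 / g(s)` for a
root `s ≥ 0` of `s g(s) = ξ`. The value `K(0)` is left free: in the monotonicity estimate it only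
multiplies zeros, and there is no natural choice for it when `g(0) = 0`. -/
def IsConductivity (g K : ℝ → ℝ) : Prop :=
  ∀ ξ, 0 < ξ → ∃ s, 0 ≤ s ∧ s * g s = ξ ∧ K ξ = 1 / g s

namespace IsConductivity

variable {g K : ℝ → ℝ} {β ξ η : ℝ}

lemma exists_root_apply_pos (h : IsConductivity g K) (hξ : 0 < ξ) :
    ∃ s, 0 ≤ s ∧ 0 < g s ∧ s * g s = ξ ∧ K ξ = 1 / g s := by
  obtain ⟨s, hs, hsξ, hK⟩ := h ξ hξ
  exact ⟨s, hs, pos_of_mul_pos_right (hsξ ▸ hξ) hs, hsξ, hK⟩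

lemma pos (h : IsConductivity g K) (hξ : 0 < ξ) : 0 < K ξ := by
  obtain ⟨s, -, hgs, -, hK⟩ := h.exists_root_apply_pos hξ
  exact hK ▸ one_div_pos.2 hgs

lemma exists_root_eq_mul_self (h : IsConductivity g K) (hξ : 0 ≤ ξ) :
    ∃ s, 0 ≤ s ∧ s * g s = ξ ∧ K ξ * ξ = s := by
  rcases hξ.eq_or_lt with rfl | hξ
  · exact ⟨0, le_rfl, zero_mul _, mul_zero _⟩
  · obtain ⟨s, hs, hgs, rfl, hK⟩ := h.exists_root_apply_pos hξ
    exact ⟨s, hs, rfl, by rw [hK]; field_simp⟩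

lemma antitoneOn (h : IsConductivity g K) (hg : MonotoneOn g (Set.Ici 0)) :
    AntitoneOn K (Set.Ioi 0) := by
  intro η hη ξ hξ hηξ
  obtain ⟨u, hu, hgu, hue, hKξ⟩ := h.exists_root_apply_pos hξ
  obtain ⟨v, hv, hgv, hve, hKη⟩ := h.exists_root_apply_pos hη
  have hvu : v ≤ u := le_of_mul_apply_le_mul_apply hg hu hgu (by rwa [hue, hve])
  rw [hKξ, hKη]
  exact one_div_le_one_div_of_le hgv (hg hv hu hvu)

lemma mul_sub_le_mul_self_sub_mul_self (h : IsConductivity g K) (hg : MonotoneOn g (Set.Ici 0))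
    (hβ : 0 ≤ β)
    (hgrowth : ∀ u v, 0 ≤ v → v ≤ u → u * g u - v * g v ≤ (β + 1) * g u * (u - v))
    (hη : 0 ≤ η) (hηξ : η ≤ ξ) :
    1 / (β + 1) * K ξ * (ξ - η) ≤ K ξ * ξ - K η * η := by
  rcases (hη.trans hηξ).eq_or_lt with rfl | hξ
  · simp [le_antisymm hηξ hη]
  obtain ⟨u, hu, hgu, hue, hKξ⟩ := h.exists_root_apply_pos hξ
  obtain ⟨v, hv, hve, hKη⟩ := h.exists_root_eq_mul_self hη
  have hvu : v ≤ u := le_of_mul_apply_le_mul_apply hg hu hgu (by rwa [hue, hve])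
  calc 1 / (β + 1) * K ξ * (ξ - η) = (u * g u - v * g v) / ((β + 1) * g u) := by
        rw [hKξ, hue, hve]; field_simp
    _ ≤ u - v := (div_le_iff₀' (by positivity)).2 (hgrowth u v hv hvu)
    _ = K ξ * ξ - K η * η := by rw [hKη, hKξ, ← hue]; field_simp

lemma mul_sub_sq_le (h : IsConductivity g K) (hg : MonotoneOn g (Set.Ici 0)) (hβ : 0 ≤ β)
    (hgrowth : ∀ u v, 0 ≤ v → v ≤ u → u * g u - v * g v ≤ (β + 1) * g u * (u - v))
    (hξ : 0 ≤ ξ) (hη : 0 ≤ η) :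
    1 / (β + 1) * K (max ξ η) * (ξ - η) ^ 2 ≤ (K ξ * ξ - K η * η) * (ξ - η) := by
  wlog hηξ : η ≤ ξ generalizing ξ η
  · have swapped := this hη hξ (le_of_not_ge hηξ)
    rw [max_comm] at swapped
    linarith
  rw [max_eq_left hηξ, sq, ← mul_assoc]
  exact mul_le_mul_of_nonneg_right
    (h.mul_sub_le_mul_self_sub_mul_self hg hβ hgrowth hη hηξ) (sub_nonneg.2 hηξ)

lemma two_mul_max_le_add (h : IsConductivity g K) (hg : MonotoneOn g (Set.Ici 0)) (hβ : 0 ≤ β)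
    (hξ : 0 < ξ) (hη : 0 < η) : 2 * (1 / (β + 1) * K (max ξ η)) ≤ K ξ + K η := by
  have hmax : 0 < max ξ η := lt_max_of_lt_left hξ
  have hle : 1 / (β + 1) * K (max ξ η) ≤ K (max ξ η) :=
    mul_le_of_le_one_left (h.pos hmax).le ((div_le_one (by positivity)).2 (by linarith))
  linarith [h.antitoneOn hg hξ hmax (le_max_left ξ η), h.antitoneOn hg hη hmax (le_max_right ξ η)]

theorem mul_norm_sub_sq_le_inner {E : Type*} [NormedAddCommGroup E] [InnerProductSpace ℝ E]
    (h : IsConductivity g K) (hg : MonotoneOn g (Set.Ici 0)) (hβ : 0 ≤ β)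
    (hgrowth : ∀ u v, 0 ≤ v → v ≤ u → u * g u - v * g v ≤ (β + 1) * g u * (u - v)) (y z : E) :
    1 / (β + 1) * K (max ‖y‖ ‖z‖) * ‖y - z‖ ^ 2 ≤ inner ℝ (K ‖y‖ • y - K ‖z‖ • z) (y - z) :=
  mul_norm_sub_sq_le_inner_smul_sub_smul
    (fun hy hz => h.two_mul_max_le_add hg hβ (norm_pos_iff.2 hy) (norm_pos_iff.2 hz))
    (h.mul_sub_sq_le hg hβ hgrowth (norm_nonneg y) (norm_nonneg z))

end IsConductivity

theorem stmt9_general {ι E : Type*} [NormedAddCommGroup E] [InnerProductSpace ℝ E]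
    {S : Finset ι} {c α : ι → ℝ} {β : ℝ} {g K : ℝ → ℝ} (hβ : 0 ≤ β) (hc : ∀ i ∈ S, 0 ≤ c i)
    (hα : ∀ i ∈ S, α i ∈ Set.Icc 0 β) (hg : ∀ t, 0 ≤ t → g t = ∑ i ∈ S, c i * t ^ α i)
    (hK : IsConductivity g K) (y z : E) :
    (1 - β / (β + 1)) * K (max ‖y‖ ‖z‖) * ‖y - z‖ ^ 2 ≤
      inner ℝ (K ‖y‖ • y - K ‖z‖ • z) (y - z) := by
  have hmono : MonotoneOn g (Set.Ici 0) :=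
    (monotoneOn_sum_mul_rpow hc fun i hi => (hα i hi).1).congr fun t ht => (hg t ht).symm
  rw [one_sub_div (by positivity), add_sub_cancel_left]
  refine hK.mul_norm_sub_sq_le_inner hmono hβ (fun u v hv hvu => ?_) y z
  rw [hg u (hv.trans hvu), hg v hv]
  exact mul_sum_mul_rpow_sub_le hc hα hv hvu

/-- Monotonicity, Lemma 1.2: for all `y, y' ∈ ℝ^d`,
`(K(|y|) y - K(|y'|) y') · (y - y') ≥ (1-a) K(max(|y|,|y'|)) |y - y'|²`. -/
theorem stmt9
    (N : ℕ) (hN : 1 ≤ N)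
    (α : ℕ → ℝ) (hα0 : α 0 = 0) (hαmono : ∀ i < N, α i < α (i + 1))
    (aa : ℕ → ℝ) (ha0 : 0 < aa 0) (haN : 0 < aa N) (hann : ∀ j ≤ N, 0 ≤ aa j)
    (g : ℝ → ℝ)
    (hg : ∀ t : ℝ, 0 ≤ t → g t = ∑ j ∈ Finset.range (N + 1), aa j * t ^ α j)
    (s : ℝ → ℝ) (hs : ∀ ξ : ℝ, 0 ≤ ξ → 0 ≤ s ξ ∧ s ξ * g (s ξ) = ξ)
    (K : ℝ → ℝ) (hK : ∀ ξ : ℝ, 0 ≤ ξ → K ξ = 1 / g (s ξ))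
    (a : ℝ) (ha : a = α N / (α N + 1))
    (d : ℕ) (hd : 1 ≤ d) :
    ∀ y y' : EuclideanSpace ℝ (Fin d),
      (1 - a) * K (max ‖y‖ ‖y'‖) * ‖y - y'‖ ^ 2 ≤
        (inner ℝ (K ‖y‖ • y - K ‖y'‖ • y') (y - y') : ℝ) := by
  have hmono : MonotoneOn α (Set.Iic N) :=
    monotoneOn_of_le_add_one Set.ordConnected_Iic fun i _ _ hi => (hαmono i hi).le
  have hle : ∀ j ∈ Finset.range (N + 1), j ≤ N := fun j hj => Finset.mem_range_succ_iff.1 hj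
  have hα_mem : ∀ j ≤ N, α j ∈ Set.Icc 0 (α N) := fun j hj =>
    ⟨hα0 ▸ hmono (Nat.zero_le N) hj (Nat.zero_le j), hmono hj Set.self_mem_Iic hj⟩
  have hcond : IsConductivity g K := fun ξ hξ =>
    ⟨s ξ, (hs ξ hξ.le).1, (hs ξ hξ.le).2, hK ξ hξ.le⟩
  rw [ha]
  exact stmt9_general (hα_mem N le_rfl).1 (fun j hj => hann j (hle j hj))
    (fun j hj => hα_mem j (hle j hj)) hg hcond
end

section
/- (Lemma A.1(i).) Let φ : [0,∞) → [0,∞) be a continuous, strictly increasing bijection of [0,∞) onto itself. Let y : [0,∞) → [0,∞) be continuous on [0,∞) and differentiable on (0,∞), and let h, f : [0,∞) → ℝ be continuous with h(t) > 0 and f(t) ≥ 0 for all t, such that y'(t) ≤ −h(t)·φ^{−1}(y(t)) + f(t) for all t > 0. If M : [0,∞) → ℝ is an increasing continuous function with M(t) ≥ f(t)/h(t) for all t ≥ 0, then y(t) ≤ y(0) + φ(M(t)) for all t ≥ 0. -/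
/-!
Fix `T` and put `c = max (y 0) (φ (M T))`. While `y > c` on `(0, T]`, one has
`φ⁻¹(y) ≥ M T ≥ f / h`, so the differential inequality makes `y` nonincreasing there. Since
`y 0 ≤ c`, the function `y` cannot have climbed above `c` after the last time in `[0, T]` at which
`y ≤ c`.
-/

open Set

theorem exists_le_and_forall_Ioc_lt {α β : Type*}
    [LinearOrder α] [TopologicalSpace α] [OrderClosedTopology α] [CompactIccSpace α]
    [LinearOrder β] [TopologicalSpace β] [ClosedIicTopology β]
    {g : α → β} {a b : α} {c : β} (hab : a ≤ b) (hg : ContinuousOn g (Icc a b)) (ha : g a ≤ c) :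
    ∃ s ∈ Icc a b, g s ≤ c ∧ ∀ t ∈ Ioc s b, c < g t := by
  have hcompact : IsCompact (Icc a b ∩ g ⁻¹' Iic c) :=
    isCompact_Icc.of_isClosed_subset
      (hg.preimage_isClosed_of_isClosed isClosed_Icc isClosed_Iic) inter_subset_left
  obtain ⟨s, ⟨hs, hgs⟩, hmax⟩ := hcompact.exists_isGreatest ⟨a, left_mem_Icc.2 hab, ha⟩
  refine ⟨s, hs, hgs, fun t ht => ?_⟩
  by_contra! hgt
  exact ht.1.not_ge (hmax ⟨⟨hs.1.trans ht.1.le, ht.2⟩, hgt⟩)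

theorem le_of_deriv_nonpos_of_lt {g : ℝ → ℝ} {a b c : ℝ} (hab : a ≤ b)
    (hg : ContinuousOn g (Icc a b)) (hg' : DifferentiableOn ℝ g (Ioo a b)) (ha : g a ≤ c)
    (hderiv : ∀ t ∈ Ioo a b, c < g t → deriv g t ≤ 0) : g b ≤ c := by
  obtain ⟨s, hs, hgs, hlt⟩ := exists_le_and_forall_Ioc_lt hab hg ha
  have hanti : AntitoneOn g (Icc s b) := by
    refine antitoneOn_of_deriv_nonpos (convex_Icc s b) (hg.mono (Icc_subset_Icc_left hs.1)) ?_ ?_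
    · rw [interior_Icc]
      exact hg'.mono (Ioo_subset_Ioo_left hs.1)
    · rw [interior_Icc]
      exact fun t ht =>
        hderiv t (Ioo_subset_Ioo_left hs.1 ht) (hlt t (Ioo_subset_Ioc_self ht))
  exact (hanti (left_mem_Icc.2 hs.2) (right_mem_Icc.2 hs.2) hs.2).trans hgs

theorem lt_rightInvOn_of_map_lt {α β : Type*} [LinearOrder α] [Preorder β]
    {φ : α → β} {ψ : β → α} {s : Set α} {u : Set β} {m : α} {v : β}
    (hφ : MonotoneOn φ s) (hψ : MapsTo ψ u s) (hφψ : RightInvOn ψ φ u)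
    (hm : m ∈ s) (hv : v ∈ u) (h : φ m < v) : m < ψ v :=
  hφ.reflect_lt hm (hψ hv) (by rwa [hφψ hv])

theorem stmt14_general {φ ψ y h f M : ℝ → ℝ}
    (hφ : MonotoneOn φ (Ici 0)) (hψ : MapsTo ψ (Ici 0) (Ici 0)) (hφψ : RightInvOn ψ φ (Ici 0))
    (hyc : ContinuousOn y (Ici 0)) (hyd : DifferentiableOn ℝ y (Ioi 0))
    (hy : MapsTo y (Ici 0) (Ici 0))
    (hh : ∀ t, 0 < t → 0 ≤ h t)
    (hode : ∀ t, 0 < t → deriv y t ≤ -h t * ψ (y t) + f t)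
    (hM : MonotoneOn M (Ici 0)) (hM0 : MapsTo M (Ici 0) (Ici 0))
    (hfM : ∀ t, 0 < t → f t ≤ h t * M t) {T : ℝ} (hT : 0 ≤ T) :
    y T ≤ max (y 0) (φ (M T)) := by
  refine le_of_deriv_nonpos_of_lt hT (hyc.mono Icc_subset_Ici_self)
    (hyd.mono Ioo_subset_Ioi_self) (le_max_left _ _) fun t ht hlt => ?_
  have ht0 : 0 ≤ t := ht.1.le
  have hMψ : M t ≤ ψ (y t) :=
    calc M t ≤ M T := hM ht0 hT ht.2.le
      _ ≤ ψ (y t) :=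
        (lt_rightInvOn_of_map_lt hφ hψ hφψ (hM0 hT) (hy ht0)
          ((le_max_right _ _).trans_lt hlt)).le
  calc deriv y t ≤ -h t * ψ (y t) + f t := hode t ht.1
    _ ≤ -h t * ψ (y t) + h t * ψ (y t) := by
      gcongr
      exact (hfM t ht.1).trans (mul_le_mul_of_nonneg_left hMψ (hh t ht.1))
    _ = 0 := by ring

/-- Lemma A.1(i): if `y' ≤ -h·φ⁻¹(y) + f` on `(0,∞)` and `M` is an increasing
continuous function with `M ≥ f/h`, then `y(t) ≤ y(0) + φ(M(t))` for all `t ≥ 0`. -/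
theorem stmt14 (φ ψ y h f M : ℝ → ℝ)
    (hφc : ContinuousOn φ (Set.Ici 0))
    (hφmono : StrictMonoOn φ (Set.Ici 0))
    (hφbij : Set.BijOn φ (Set.Ici 0) (Set.Ici 0))
    (hψ : Set.InvOn ψ φ (Set.Ici 0) (Set.Ici 0))
    (hyc : ContinuousOn y (Set.Ici 0))
    (hyd : ∀ t : ℝ, 0 < t → DifferentiableAt ℝ y t)
    (hy0 : ∀ t : ℝ, 0 ≤ t → 0 ≤ y t)
    (hhc : ContinuousOn h (Set.Ici 0)) (hhpos : ∀ t : ℝ, 0 ≤ t → 0 < h t)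
    (hfc : ContinuousOn f (Set.Ici 0)) (hfnn : ∀ t : ℝ, 0 ≤ t → 0 ≤ f t)
    (hode : ∀ t : ℝ, 0 < t → deriv y t ≤ -h t * ψ (y t) + f t)
    (hMc : ContinuousOn M (Set.Ici 0)) (hMmono : MonotoneOn M (Set.Ici 0))
    (hM : ∀ t : ℝ, 0 ≤ t → f t / h t ≤ M t) :
    ∀ t : ℝ, 0 ≤ t → y t ≤ y 0 + φ (M t) := by
  intro T hT
  have hM0 : MapsTo M (Ici 0) (Ici 0) := fun t ht =>
    (div_nonneg (hfnn t ht) (hhpos t ht).le).trans (hM t ht)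
  calc y T ≤ max (y 0) (φ (M T)) :=
        stmt14_general hφmono.monotoneOn (hψ.1.mapsTo hφbij.surjOn) hψ.2 hyc
          (fun t ht => (hyd t ht).differentiableWithinAt) hy0 (fun t ht => (hhpos t ht.le).le)
          hode hMmono hM0 (fun t ht => (div_le_iff₀' (hhpos t ht.le)).1 (hM t ht.le)) hT
    _ ≤ y 0 + φ (M T) := max_le_add_of_nonneg (hy0 0 le_rfl) (hφbij.mapsTo (hM0 hT))
end

section
/- (Lemma A.1(ii).) Let φ : [0,∞) → [0,∞) be a continuous, strictly increasing bijection of [0,∞) onto itself. Let y : [0,∞) → [0,∞) be continuous on [0,∞) and differentiable on (0,∞), and let h, f : [0,∞) → ℝ be continuous with h(t) > 0 and f(t) ≥ 0 for all t, such that y'(t) ≤ −h(t)·φ^{−1}(y(t)) + f(t) for all t > 0. If ∫₀^∞ h(τ) dτ = ∞ and L := limsup_{t→∞} f(t)/h(t) is finite, then limsup_{t→∞} y(t) ≤ φ(L). -/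
open Filter
open scoped Topology

/-!
Let `c > φ(L)`. Since `φ⁻¹(c) > L`, there is a gap `δ > 0` such that `y' ≤ -δ h` at all large times
at which `y ≥ c`. As `∫ h = ∞`, staying above `c` forever would force `y → -∞`, so `y` reaches the
level `c`; and since `y' < 0` whenever `y = c`, it never rises above that level again. The same
argument at the level `-1` rules out `L < 0`, because `φ⁻¹(y) ≥ 0` and `y ≥ 0`.
-/

open Set MeasureTheory

section TailIntegral

variable {a b : ℝ} {μ : Measure ℝ}

-- The integral of a non-integrable function is `0` by convention, so divergence of the integrals
-- already carries local integrability.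
theorem intervalIntegrable_of_frequently_integral_ne_zero {E : Type*} [NormedAddCommGroup E]
    [NormedSpace ℝ E] {g : ℝ → E} (hg : ∃ᶠ t in atTop, ∫ τ in a..t, g τ ∂μ ≠ 0) (hab : a ≤ b) :
    IntervalIntegrable g μ a b := by
  obtain ⟨t, ht, hbt⟩ := (hg.and_eventually (eventually_ge_atTop b)).exists
  refine (intervalIntegral.intervalIntegrable_of_integral_ne_zero ht).mono_set ?_
  rw [uIcc_of_le hab, uIcc_of_le (hab.trans hbt)]
  exact Icc_subset_Icc_right hbt

theorem tendsto_integral_atBot_of_le {g : ℝ → ℝ}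
    (hg : Tendsto (fun t ↦ ∫ τ in a..t, g τ ∂μ) atTop atBot) (hab : a ≤ b) :
    Tendsto (fun t ↦ ∫ τ in b..t, g τ ∂μ) atTop atBot := by
  have hint {t : ℝ} (hat : a ≤ t) : IntervalIntegrable g μ a t :=
    intervalIntegrable_of_frequently_integral_ne_zero (hg.eventually_ne_atBot 0).frequently hat
  refine (tendsto_atBot_add_const_right _ (-∫ τ in a..b, g τ ∂μ) hg).congr' ?_
  filter_upwards [eventually_ge_atTop a] with t hat
  rw [← sub_eq_add_neg, intervalIntegral.integral_interval_sub_left (hint hat) (hint hab)]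

end TailIntegral

section RightDerivative

variable {y y' : ℝ → ℝ} {a c : ℝ}

theorem tendsto_atBot_of_deriv_right_le {g : ℝ → ℝ}
    (hyc : ∀ᶠ t in atTop, ContinuousAt y t)
    (hy' : ∀ᶠ t in atTop, HasDerivWithinAt y (y' t) (Ici t) t)
    (hg : Tendsto (fun t ↦ ∫ τ in a..t, g τ) atTop atBot)
    (hle : ∀ᶠ t in atTop, y' t ≤ g t) :
    Tendsto y atTop atBot := by
  obtain ⟨b, hb⟩ :=
    eventually_atTop.mp (hyc.and <| hy'.and <| hle.and <| eventually_ge_atTop a)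
  choose! hyc hy' hle hab using hb
  have hgb := tendsto_integral_atBot_of_le hg (hab b le_rfl)
  refine tendsto_atBot_mono' _ ?_ (tendsto_atBot_add_const_left _ (y b) hgb)
  filter_upwards [eventually_ge_atTop b] with t hbt
  have hgint : IntegrableOn g (Icc b t) :=
    (intervalIntegrable_iff_integrableOn_Icc_of_le hbt).mp <|
      intervalIntegrable_of_frequently_integral_ne_zero (hgb.eventually_ne_atBot 0).frequently hbt
  have hincr : y t - y b ≤ ∫ τ in b..t, g τ :=
    intervalIntegral.sub_le_integral_of_hasDeriv_right_of_le hbt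
      (fun s hs ↦ (hyc s hs.1).continuousWithinAt)
      (fun s hs ↦ (hy' s hs.1.le).mono Ioi_subset_Ici_self) hgint (fun s hs ↦ hle s hs.1.le)
  exact sub_le_iff_le_add'.mp hincr

theorem eventually_le_const_of_deriv_right_le {g : ℝ → ℝ}
    (hyc : ∀ᶠ t in atTop, ContinuousAt y t)
    (hy' : ∀ᶠ t in atTop, HasDerivWithinAt y (y' t) (Ici t) t)
    (hg : Tendsto (fun t ↦ ∫ τ in a..t, g τ) atTop atBot) (hgneg : ∀ᶠ t in atTop, g t < 0)
    (hle : ∀ᶠ t in atTop, c ≤ y t → y' t ≤ g t) :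
    ∀ᶠ t in atTop, y t ≤ c := by
  have hreach : ∃ᶠ t in atTop, y t ≤ c := by
    intro habove
    have hbot : Tendsto y atTop atBot := by
      refine tendsto_atBot_of_deriv_right_le hyc hy' hg ?_
      filter_upwards [habove, hle] with t hct hle using hle (not_le.mp hct).le
    obtain ⟨t, hct, htc⟩ := (habove.and (hbot.eventually_le_atBot c)).exists
    exact hct htc
  obtain ⟨b, hb⟩ := eventually_atTop.mp (hyc.and <| hy'.and <| hgneg.and hle)
  choose! hyc hy' hgneg hle using hb
  obtain ⟨s, hs, hbs⟩ := (hreach.and_eventually (eventually_ge_atTop b)).exists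
  filter_upwards [eventually_ge_atTop s] with t hst
  exact image_le_of_deriv_right_lt_deriv_boundary'
    (fun r hr ↦ (hyc r (hbs.trans hr.1)).continuousWithinAt)
    (fun r hr ↦ hy' r (hbs.trans hr.1)) hs continuousOn_const
    (fun r _ ↦ hasDerivWithinAt_const r (Ici r) c)
    (fun r hr hrc ↦ (hle r (hbs.trans hr.1) hrc.ge).trans_lt (hgneg r (hbs.trans hr.1)))
    (right_mem_Icc.mpr hst)

variable {u h f : ℝ → ℝ}

theorem eventually_le_const_of_limsup_div_lt {M : ℝ}
    (hyc : ∀ᶠ t in atTop, ContinuousAt y t)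
    (hy' : ∀ᶠ t in atTop, HasDerivWithinAt y (y' t) (Ici t) t)
    (hh : ∀ᶠ t in atTop, 0 < h t)
    (hint : Tendsto (fun t ↦ ∫ τ in a..t, h τ) atTop atTop)
    (hode : ∀ᶠ t in atTop, y' t ≤ -h t * u t + f t)
    (hlim : limsup (fun t ↦ ((f t / h t : ℝ) : EReal)) atTop < M)
    (hu : ∀ᶠ t in atTop, c ≤ y t → M ≤ u t) :
    ∀ᶠ t in atTop, y t ≤ c := by
  obtain ⟨m, hlm, hmM⟩ := EReal.lt_iff_exists_real_btwn.mp hlim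
  have hgap : m - M < 0 := sub_neg.mpr (EReal.coe_lt_coe_iff.mp hmM)
  have hdecay : Tendsto (fun t ↦ ∫ τ in a..t, (m - M) * h τ) atTop atBot := by
    simpa only [intervalIntegral.integral_const_mul] using hint.const_mul_atTop_of_neg hgap
  refine eventually_le_const_of_deriv_right_le hyc hy' hdecay
    (hh.mono fun t ht ↦ mul_neg_of_neg_of_pos hgap ht) ?_
  filter_upwards [hh, hode, hu, eventually_lt_of_limsup_lt hlm] with t hht hode hu hfh hcy
  have hf : f t ≤ m * h t := ((div_lt_iff₀ hht).mp (EReal.coe_lt_coe_iff.mp hfh)).le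
  calc y' t ≤ -h t * u t + f t := hode
    _ ≤ -h t * M + m * h t :=
      add_le_add (mul_le_mul_of_nonpos_left (hu hcy) (neg_nonpos.mpr hht.le)) hf
    _ = (m - M) * h t := by ring

theorem limsup_div_nonneg_of_deriv_right_le
    (hyc : ∀ᶠ t in atTop, ContinuousAt y t)
    (hy' : ∀ᶠ t in atTop, HasDerivWithinAt y (y' t) (Ici t) t)
    (hy0 : ∀ᶠ t in atTop, 0 ≤ y t) (hu0 : ∀ᶠ t in atTop, 0 ≤ u t)
    (hh : ∀ᶠ t in atTop, 0 < h t)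
    (hint : Tendsto (fun t ↦ ∫ τ in a..t, h τ) atTop atTop)
    (hode : ∀ᶠ t in atTop, y' t ≤ -h t * u t + f t) :
    0 ≤ limsup (fun t ↦ ((f t / h t : ℝ) : EReal)) atTop := by
  by_contra! hneg
  have hle : ∀ᶠ t in atTop, y t ≤ -1 :=
    eventually_le_const_of_limsup_div_lt hyc hy' hh hint hode hneg (hu0.mono fun _ hu _ ↦ hu)
  obtain ⟨t, hlet, h0t⟩ := (hle.and hy0).exists
  linarith

end RightDerivative

theorem stmt15_general {φ ψ y y' h f : ℝ → ℝ} {a L : ℝ}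
    (hφ : MonotoneOn φ (Ici 0)) (hψ : MapsTo ψ (Ici 0) (Ici 0)) (hφψ : RightInvOn ψ φ (Ici 0))
    (hyc : ∀ᶠ t in atTop, ContinuousAt y t)
    (hy' : ∀ᶠ t in atTop, HasDerivWithinAt y (y' t) (Ici t) t)
    (hy0 : ∀ᶠ t in atTop, 0 ≤ y t) (hh : ∀ᶠ t in atTop, 0 < h t)
    (hode : ∀ᶠ t in atTop, y' t ≤ -h t * ψ (y t) + f t)
    (hint : Tendsto (fun t ↦ ∫ τ in a..t, h τ) atTop atTop)
    (hL : limsup (fun t ↦ ((f t / h t : ℝ) : EReal)) atTop = L) :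
    limsup (fun t ↦ (y t : EReal)) atTop ≤ φ L := by
  have hL0 : 0 ≤ L := by
    have := limsup_div_nonneg_of_deriv_right_le hyc hy' hy0 (hy0.mono fun _ h0 ↦ hψ h0) hh hint hode
    exact EReal.coe_nonneg.mp (hL ▸ this)
  refine EReal.le_of_forall_lt_iff_le.mp fun c hc ↦ limsup_le_of_le (by isBoundedDefault) ?_
  have hc0 : max c 0 ∈ Ici (0 : ℝ) := le_max_right c 0
  have hLM : L < ψ (max c 0) := by
    by_contra! hle
    have : max c 0 ≤ φ L := (hφψ hc0).symm.trans_le (hφ (hψ hc0) hL0 hle)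
    exact ((le_max_left c 0).trans this).not_gt (EReal.coe_lt_coe_iff.mp hc)
  have hψmono : MonotoneOn ψ (Ici 0) := Function.monotoneOn_of_rightInvOn_of_mapsTo hφ hφψ hψ
  have hyle : ∀ᶠ t in atTop, y t ≤ c :=
    eventually_le_const_of_limsup_div_lt hyc hy' hh hint hode
      (hL.trans_lt (EReal.coe_lt_coe_iff.mpr hLM))
      (hy0.mono fun t h0 hct ↦ hψmono hc0 h0 (max_le hct h0))
  exact hyle.mono fun t ht ↦ EReal.coe_le_coe_iff.mpr ht

/-- Lemma A.1(ii): if `y' ≤ -h·φ⁻¹(y) + f` on `(0,∞)`, `∫₀^∞ h = ∞`, and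
`L = limsup_{t→∞} f(t)/h(t)` is finite, then `limsup_{t→∞} y(t) ≤ φ(L)`. -/
theorem stmt15 (φ ψ y h f : ℝ → ℝ)
    (hφc : ContinuousOn φ (Set.Ici 0))
    (hφmono : StrictMonoOn φ (Set.Ici 0))
    (hφbij : Set.BijOn φ (Set.Ici 0) (Set.Ici 0))
    (hψ : Set.InvOn ψ φ (Set.Ici 0) (Set.Ici 0))
    (hyc : ContinuousOn y (Set.Ici 0))
    (hyd : ∀ t : ℝ, 0 < t → DifferentiableAt ℝ y t)
    (hy0 : ∀ t : ℝ, 0 ≤ t → 0 ≤ y t)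
    (hhc : ContinuousOn h (Set.Ici 0)) (hhpos : ∀ t : ℝ, 0 ≤ t → 0 < h t)
    (hfc : ContinuousOn f (Set.Ici 0)) (hfnn : ∀ t : ℝ, 0 ≤ t → 0 ≤ f t)
    (hode : ∀ t : ℝ, 0 < t → deriv y t ≤ -h t * ψ (y t) + f t)
    (hint : Tendsto (fun t : ℝ => ∫ τ in (0:ℝ)..t, h τ) atTop atTop)
    (L : ℝ)
    (hL : limsup (fun t : ℝ => ((f t / h t : ℝ) : EReal)) atTop = (L : EReal)) :
    limsup (fun t : ℝ => ((y t : ℝ) : EReal)) atTop ≤ ((φ L : ℝ) : EReal) := by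
  have hpos := eventually_gt_atTop (0 : ℝ)
  have hnonneg := eventually_ge_atTop (0 : ℝ)
  exact stmt15_general hφmono.monotoneOn (hψ.1.mapsTo hφbij.surjOn) hψ.2
    (hpos.mono fun t ht ↦ (hyd t ht).continuousAt)
    (hpos.mono fun t ht ↦ (hyd t ht).hasDerivAt.hasDerivWithinAt)
    (hnonneg.mono hy0) (hnonneg.mono hhpos) (hpos.mono hode) hint hL
end

section
/- (Lemma A.2.) Let c > 0 and 1 < γ < 2, and define φ(z) = c(z + z^γ) for z ≥ 0, which is a strictly increasing bijection of [0,∞) onto itself. Let y : [0,∞) → [0,∞) be continuous on [0,∞) and differentiable on (0,∞), and let f : [0,∞) → [0,∞) be continuous on [0,∞) and continuously differentiable on (0,∞), such that y'(t) ≤ −φ^{−1}(y(t)) + f(t) for all t > 0. Assume β := limsup_{t→∞} [f'(t)]⁻ is finite, where [z]⁻ = max{−z, 0}. Then there exists T > 0 such that for all t > T, y(t) ≤ C·(1 + β^{γ/(2−γ)} + f(t)^γ), where C = 3·(32(1+c))^{2/(2−γ)}. -/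
open Filter

/-!
At a time where `y ≥ φ(w)` one has `φ⁻¹(y) ≥ w`, so with `w = 2f + K` the differential inequality
gives `y' ≤ -w + f = -(w + K)/2`. For large times the barrier `φ(2f + K)` itself cannot
decrease faster than `2(β + 1)φ'(w)`, and `φ'(w)` is of order `w^(γ-1)`; since `γ < 2`, a large
constant `K`, of order `(1 + β)^(1/(2-γ))`, makes this at most `w/2`. Hence `y - φ(2f + K)`
decreases at rate at least `K/2` as long as it is nonnegative: it becomes nonpositive in finite
time and stays so. Expanding `φ(2f + K)` gives the bound.
-/

section Comparison

lemma frequently_nonpos_of_hasDerivAt_le_neg {D D' : ℝ → ℝ} {δ : ℝ} (hδ : 0 < δ)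
    (hD : ∀ᶠ t in atTop, HasDerivAt D (D' t) t)
    (hD' : ∀ᶠ t in atTop, 0 ≤ D t → D' t ≤ -δ) :
    ∃ᶠ t in atTop, D t ≤ 0 := by
  intro hpos
  obtain ⟨T, hT⟩ := ((hD.and hD').and hpos).exists_forall_of_atTop
  have hderiv : ∀ t ≥ T, HasDerivAt D (D' t) t := fun t ht => (hT t ht).1.1
  have hDpos : ∀ t ≥ T, 0 < D t := fun t ht => not_le.1 (hT t ht).2
  have hlt : T < T + D T / δ := lt_add_of_pos_right T (div_pos (hDpos T le_rfl) hδ)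
  obtain ⟨s, hs, hslope⟩ := exists_hasDerivAt_eq_slope D D' hlt
    (fun t ht => (hderiv t ht.1).continuousAt.continuousWithinAt)
    (fun t ht => hderiv t ht.1.le)
  have hslope_le : (D (T + D T / δ) - D T) / (T + D T / δ - T) ≤ -δ :=
    hslope ▸ (hT s hs.1.le).1.2 (hDpos s hs.1.le).le
  have hdrop : D (T + D T / δ) - D T ≤ -D T := by
    rw [div_le_iff₀ (sub_pos.2 hlt), add_sub_cancel_left] at hslope_le
    rwa [neg_mul, mul_div_cancel₀ _ hδ.ne'] at hslope_le
  linarith [hDpos _ hlt.le]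

lemma eventually_nonpos_of_hasDerivAt_le_neg {D D' : ℝ → ℝ} {δ : ℝ} (hδ : 0 < δ)
    (hD : ∀ᶠ t in atTop, HasDerivAt D (D' t) t)
    (hD' : ∀ᶠ t in atTop, 0 ≤ D t → D' t ≤ -δ) :
    ∀ᶠ t in atTop, D t ≤ 0 := by
  obtain ⟨T, hT⟩ := (hD.and hD').exists_forall_of_atTop
  obtain ⟨S, hTS, hDS⟩ := frequently_atTop.1 (frequently_nonpos_of_hasDerivAt_le_neg hδ hD hD') T
  have hderiv : ∀ t ≥ S, HasDerivAt D (D' t) t := fun t ht => (hT t (hTS.trans ht)).1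
  filter_upwards [eventually_ge_atTop S] with t ht
  refine image_le_of_deriv_right_lt_deriv_boundary (B := 0) (B' := 0)
    (fun s hs => (hderiv s hs.1).continuousAt.continuousWithinAt)
    (fun s hs => (hderiv s hs.1).hasDerivWithinAt) hDS (fun s => hasDerivAt_const s 0)
    (fun s hs hzero => ?_) (Set.right_mem_Icc.2 ht)
  exact ((hT s (hTS.trans hs.1)).2 hzero.ge).trans_lt (neg_lt_zero.2 hδ)

lemma eventually_le_comp_two_mul_add {φ φ' ψ y y' f f' : ℝ → ℝ} {b K : ℝ} (hK : 0 < K)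
    (hφ : ∀ w ≥ K, HasDerivAt φ (φ' w) w) (hφ'_nonneg : ∀ w ≥ K, 0 ≤ φ' w)
    (hφ'_le : ∀ w ≥ K, 4 * b * φ' w ≤ w) (hψ : ∀ w ≥ K, ∀ x, φ w ≤ x → w ≤ ψ x)
    (hy : ∀ᶠ t in atTop, HasDerivAt y (y' t) t) (hf : ∀ᶠ t in atTop, HasDerivAt f (f' t) t)
    (hf_nonneg : ∀ᶠ t in atTop, 0 ≤ f t) (hf' : ∀ᶠ t in atTop, -b ≤ f' t)
    (hode : ∀ᶠ t in atTop, y' t ≤ -ψ (y t) + f t) :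
    ∀ᶠ t in atTop, y t ≤ φ (2 * f t + K) := by
  have hw : ∀ᶠ t in atTop, K ≤ 2 * f t + K := by
    filter_upwards [hf_nonneg] with t hft
    linarith
  have hderiv : ∀ᶠ t in atTop, HasDerivAt (fun s => y s - φ (2 * f s + K))
      (y' t - φ' (2 * f t + K) * (2 * f' t)) t := by
    filter_upwards [hy, hf, hw] with t hyt hft hwt
    exact hyt.sub ((hφ _ hwt).comp t ((hft.const_mul 2).add_const K))
  have hdecay : ∀ᶠ t in atTop, 0 ≤ y t - φ (2 * f t + K) →
      y' t - φ' (2 * f t + K) * (2 * f' t) ≤ -(K / 2) := by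
    filter_upwards [hode, hf', hw] with t hodet hft' hwt habove
    have hψw : 2 * f t + K ≤ ψ (y t) := hψ _ hwt _ (sub_nonneg.1 habove)
    have hbarrier : φ' (2 * f t + K) * -b ≤ φ' (2 * f t + K) * f' t :=
      mul_le_mul_of_nonneg_left hft' (hφ'_nonneg _ hwt)
    linarith [hφ'_le _ hwt]
  exact (eventually_nonpos_of_hasDerivAt_le_neg (half_pos hK) hderiv hdecay).mono
    fun t ht => sub_nonpos.1 ht

end Comparison

lemma le_of_leftInvOn_Ici_of_apply_le {φ ψ : ℝ → ℝ} {a w x : ℝ}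
    (hφ : ContinuousOn φ (Set.Ici a)) (hφ_top : Tendsto φ atTop atTop)
    (hψ : Set.LeftInvOn ψ φ (Set.Ici a)) (hw : a ≤ w) (hx : φ w ≤ x) : w ≤ ψ x := by
  obtain ⟨z, hwz, rfl⟩ :=
    intermediate_value_Ici (hφ.mono (Set.Ici_subset_Ici.2 hw)) hφ_top hx
  rw [hψ (hw.trans hwz)]
  exact hwz

section NegPartLimsup

variable {ι : Type*} {l : Filter ι} {g : ι → ℝ} {β : ℝ}

lemma nonneg_of_limsup_max_neg_zero_le [NeBot l]
    (hβ : limsup (fun i => ((max (-g i) 0 : ℝ) : EReal)) l ≤ β) : 0 ≤ β := by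
  have hzero : ((0 : ℝ) : EReal) ≤ limsup (fun i => ((max (-g i) 0 : ℝ) : EReal)) l :=
    le_limsup_of_frequently_le
      (Frequently.of_forall fun i => EReal.coe_le_coe (le_max_right (-g i) 0))
  exact EReal.coe_le_coe_iff.1 (hzero.trans hβ)

lemma eventually_neg_lt_of_limsup_max_neg_zero_le
    (hβ : limsup (fun i => ((max (-g i) 0 : ℝ) : EReal)) l ≤ β) {b : ℝ} (hb : β < b) :
    ∀ᶠ i in l, -b < g i := by
  filter_upwards [eventually_lt_of_limsup_lt (hβ.trans_lt (EReal.coe_lt_coe hb))] with i hi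
  exact neg_lt.1 ((le_max_left _ _).trans_lt (EReal.coe_lt_coe_iff.1 hi))

end NegPartLimsup

lemma add_rpow_le_two_rpow_mul_add_rpow {a b p : ℝ} (ha : 0 ≤ a) (hb : 0 ≤ b) (hp : 1 ≤ p) :
    (a + b) ^ p ≤ 2 ^ (p - 1) * (a ^ p + b ^ p) := by
  lift a to NNReal using ha
  lift b to NNReal using hb
  exact_mod_cast NNReal.rpow_add_le_mul_rpow_add_rpow a b hp

/-- The function `φ(z) = c(z + z^γ)` of the differential inequality, on the whole real line;
only its values at `z ≥ 0` matter. -/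
noncomputable def phi (c γ z : ℝ) : ℝ := c * (z + z ^ γ)

namespace phi

variable {c γ : ℝ}

protected lemma hasDerivAt (hγ : 1 ≤ γ) (z : ℝ) :
    HasDerivAt (phi c γ) (c * (1 + γ * z ^ (γ - 1))) z :=
  ((hasDerivAt_id z).add (Real.hasDerivAt_rpow_const (Or.inr hγ))).const_mul c

protected lemma tendsto_atTop (hc : 0 < c) (hγ : 0 < γ) : Tendsto (phi c γ) atTop atTop :=
  (tendsto_id.atTop_add_atTop (tendsto_rpow_atTop hγ)).const_mul_atTop hc

lemma le_leftInverse {ψ : ℝ → ℝ} {w x : ℝ} (hc : 0 < c) (hγ : 1 ≤ γ)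
    (hψ : Set.LeftInvOn ψ (phi c γ) (Set.Ici 0)) (hw : 0 ≤ w) (hx : phi c γ w ≤ x) :
    w ≤ ψ x :=
  le_of_leftInvOn_Ici_of_apply_le
    (fun z _ => (phi.hasDerivAt hγ z).continuousAt.continuousWithinAt)
    (phi.tendsto_atTop hc (zero_lt_one.trans_le hγ)) hψ hw hx

lemma deriv_le_mul_rpow {w : ℝ} (hc : 0 ≤ c) (hγ1 : 1 ≤ γ) (hγ2 : γ ≤ 2) (hw : 1 ≤ w) :
    c * (1 + γ * w ^ (γ - 1)) ≤ 3 * c * w ^ (γ - 1) := by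
  have hone : 1 ≤ w ^ (γ - 1) := Real.one_le_rpow hw (sub_nonneg.2 hγ1)
  calc c * (1 + γ * w ^ (γ - 1)) ≤ c * (w ^ (γ - 1) + 2 * w ^ (γ - 1)) := by gcongr
    _ = 3 * c * w ^ (γ - 1) := by ring

lemma four_mul_mul_deriv_le {b K w : ℝ} (hc : 0 ≤ c) (hγ1 : 1 ≤ γ) (hγ2 : γ ≤ 2) (hb : 0 ≤ b)
    (hK : 1 ≤ K) (hbK : 12 * c * b ≤ K ^ (2 - γ)) (hw : K ≤ w) :
    4 * b * (c * (1 + γ * w ^ (γ - 1))) ≤ w := by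
  have hw_pos : 0 < w := by linarith
  calc 4 * b * (c * (1 + γ * w ^ (γ - 1))) ≤ 4 * b * (3 * c * w ^ (γ - 1)) :=
        mul_le_mul_of_nonneg_left (deriv_le_mul_rpow hc hγ1 hγ2 (hK.trans hw)) (by positivity)
    _ = 12 * c * b * w ^ (γ - 1) := by ring
    _ ≤ K ^ (2 - γ) * w ^ (γ - 1) := by gcongr
    _ ≤ w ^ (2 - γ) * w ^ (γ - 1) := by gcongr
    _ = w := by rw [← Real.rpow_add hw_pos, sub_add_sub_cancel, ← one_add_one_eq_two,
      add_sub_cancel_right, Real.rpow_one]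

lemma two_mul_add_le {F K : ℝ} (hc : 0 ≤ c) (hγ1 : 1 ≤ γ) (hγ2 : γ ≤ 2) (hF : 0 ≤ F)
    (hK : 1 ≤ K) : phi c γ (2 * F + K) ≤ 4 * c * (4 * F ^ γ + K ^ γ) := by
  have hlinear : 2 * F + K ≤ (2 * F + K) ^ γ := Real.self_le_rpow_of_one_le (by linarith) hγ1
  have htwo : (2 : ℝ) ^ (γ - 1) ≤ 2 :=
    Real.rpow_le_self_of_one_le one_le_two (by linarith)
  have hfour : (2 : ℝ) ^ γ ≤ 4 := by
    calc (2 : ℝ) ^ γ ≤ 2 ^ (2 : ℝ) := Real.rpow_le_rpow_of_exponent_le one_le_two hγ2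
      _ = 4 := by norm_num
  have hpow : (2 * F + K) ^ γ ≤ 2 * (4 * F ^ γ + K ^ γ) := by
    calc (2 * F + K) ^ γ ≤ 2 ^ (γ - 1) * ((2 * F) ^ γ + K ^ γ) :=
          add_rpow_le_two_rpow_mul_add_rpow (by positivity) (by positivity) hγ1
      _ = 2 ^ (γ - 1) * (2 ^ γ * F ^ γ + K ^ γ) := by rw [Real.mul_rpow zero_le_two hF]
      _ ≤ 2 * (4 * F ^ γ + K ^ γ) := by gcongr
  calc phi c γ (2 * F + K) ≤ c * (2 * (2 * F + K) ^ γ) := by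
        unfold phi
        gcongr
        linarith
    _ ≤ c * (2 * (2 * (4 * F ^ γ + K ^ γ))) := by gcongr
    _ = 4 * c * (4 * F ^ γ + K ^ γ) := by ring

end phi

/-- The shift `K` of the barrier `φ(2f + K)`. It is chosen so that `K ^ (2 - γ)` is at least
`12c(β + 1)`, which keeps the slope of the barrier under control on `[K, ∞)`. -/
noncomputable def barrierShift (c γ β : ℝ) : ℝ := (32 * (1 + c) * max 1 β) ^ (1 / (2 - γ))

namespace barrierShift

variable {c γ β : ℝ}

lemma one_le (hc : 0 ≤ c) (hγ : γ ≤ 2) : 1 ≤ barrierShift c γ β :=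
  Real.one_le_rpow (one_le_mul_of_one_le_of_one_le (by linarith) (le_max_left 1 β))
    (one_div_nonneg.2 (sub_nonneg.2 hγ))

lemma rpow_eq (hc : 0 ≤ c) (s : ℝ) :
    barrierShift c γ β ^ s =
      (32 * (1 + c)) ^ (s / (2 - γ)) * max 1 β ^ (s / (2 - γ)) := by
  rw [barrierShift, ← Real.rpow_mul (by positivity), one_div_mul_eq_div,
    Real.mul_rpow (by positivity) (by positivity)]

lemma mul_add_one_le_rpow (hc : 0 ≤ c) (hγ : γ ≠ 2) :
    12 * c * (β + 1) ≤ barrierShift c γ β ^ (2 - γ) := by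
  rw [rpow_eq hc, div_self (sub_ne_zero.2 hγ.symm), Real.rpow_one, Real.rpow_one]
  calc 12 * c * (β + 1) ≤ 12 * c * (max 1 β + max 1 β) := by
        gcongr
        exacts [le_max_right 1 β, le_max_left 1 β]
    _ = 24 * c * max 1 β := by ring
    _ ≤ 32 * (1 + c) * max 1 β := by
        gcongr ?_ * max 1 β
        linarith

end barrierShift

lemma max_one_rpow_le_one_add_rpow {x : ℝ} (hx : 0 ≤ x) (p : ℝ) :
    max 1 x ^ p ≤ 1 + x ^ p := by
  rcases max_choice 1 x with h | h <;> rw [h]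
  · rw [Real.one_rpow]
    exact le_add_of_nonneg_right (Real.rpow_nonneg hx p)
  · exact le_add_of_nonneg_left zero_le_one

lemma phi_two_mul_add_barrierShift_le {c γ β F : ℝ} (hc : 0 ≤ c) (hγ1 : 1 ≤ γ) (hγ2 : γ < 2)
    (hβ : 0 ≤ β) (hF : 0 ≤ F) :
    phi c γ (2 * F + barrierShift c γ β) ≤
      3 * (32 * (1 + c)) ^ (2 / (2 - γ)) * (1 + β ^ (γ / (2 - γ)) + F ^ γ) := by
  have hγ_pos : 0 < 2 - γ := sub_pos.2 hγ2
  set p := γ / (2 - γ) with hp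
  have hexponent : 2 / (2 - γ) = 1 + p := by
    rw [hp]
    field_simp
    ring
  set A := 32 * (1 + c)
  have hA_pos : 0 < A := by positivity
  have hAp : 1 ≤ A ^ p := Real.one_le_rpow (by linarith) (by positivity)
  have hshift : barrierShift c γ β ^ γ ≤ A ^ p * (1 + β ^ p) := by
    rw [barrierShift.rpow_eq hc]
    exact mul_le_mul_of_nonneg_left (max_one_rpow_le_one_add_rpow hβ p) (by positivity)
  have hF_le : F ^ γ ≤ A ^ p * F ^ γ := le_mul_of_one_le_left (by positivity) hAp
  have hsum_nonneg : 0 ≤ A ^ p * (1 + β ^ p) := by positivity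
  calc phi c γ (2 * F + barrierShift c γ β)
      ≤ 4 * c * (4 * F ^ γ + barrierShift c γ β ^ γ) :=
        phi.two_mul_add_le hc hγ1 hγ2.le hF (barrierShift.one_le hc hγ2.le)
    _ ≤ 4 * c * (4 * (A ^ p * F ^ γ) + 4 * (A ^ p * (1 + β ^ p))) := by
        gcongr
        linarith
    _ = 16 * c * A ^ p * (1 + β ^ p + F ^ γ) := by ring
    _ ≤ 3 * A * A ^ p * (1 + β ^ p + F ^ γ) := by
        gcongr ?_ * A ^ p * (1 + β ^ p + F ^ γ)
        linarith
    _ = 3 * A ^ (2 / (2 - γ)) * (1 + β ^ p + F ^ γ) := by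
        rw [hexponent, Real.rpow_one_add' hA_pos.le (by positivity), mul_assoc 3]

theorem stmt16_general {c γ β : ℝ} (hc : 0 < c) (hγ1 : 1 ≤ γ) (hγ2 : γ < 2)
    {ψ y y' f f' : ℝ → ℝ} (hψ : Set.LeftInvOn ψ (phi c γ) (Set.Ici 0))
    (hy : ∀ᶠ t in atTop, HasDerivAt y (y' t) t) (hf : ∀ᶠ t in atTop, HasDerivAt f (f' t) t)
    (hf_nonneg : ∀ᶠ t in atTop, 0 ≤ f t) (hode : ∀ᶠ t in atTop, y' t ≤ -ψ (y t) + f t)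
    (hβ : limsup (fun t : ℝ => ((max (-f' t) 0 : ℝ) : EReal)) atTop ≤ β) :
    ∀ᶠ t in atTop,
      y t ≤ 3 * (32 * (1 + c)) ^ (2 / (2 - γ)) * (1 + β ^ (γ / (2 - γ)) + f t ^ γ) := by
  have hβ_nonneg : 0 ≤ β := nonneg_of_limsup_max_neg_zero_le hβ
  have hf' : ∀ᶠ t in atTop, -(β + 1) < f' t :=
    eventually_neg_lt_of_limsup_max_neg_zero_le hβ (lt_add_one β)
  have hK : 1 ≤ barrierShift c γ β := barrierShift.one_le hc.le hγ2.le
  have hbarrier : ∀ᶠ t in atTop, y t ≤ phi c γ (2 * f t + barrierShift c γ β) := by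
    refine eventually_le_comp_two_mul_add (zero_lt_one.trans_le hK)
      (fun w _ => phi.hasDerivAt hγ1 w) (fun w hw => ?_)
      (fun w hw => phi.four_mul_mul_deriv_le hc.le hγ1 hγ2.le (by positivity) hK
        (barrierShift.mul_add_one_le_rpow hc.le hγ2.ne) hw)
      (fun w hw x hx => phi.le_leftInverse hc hγ1 hψ (by linarith) hx)
      hy hf hf_nonneg (hf'.mono fun t ht => ht.le) hode
    have hw_nonneg : 0 ≤ w := by linarith
    positivity
  filter_upwards [hbarrier, hf_nonneg] with t hyt hft
  exact hyt.trans (phi_two_mul_add_barrierShift_le hc.le hγ1 hγ2 hβ_nonneg hft)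

/-- Lemma A.2: with `φ(z) = c(z + z^γ)`, `1 < γ < 2`, if `y' ≤ -φ⁻¹(y) + f` on `(0,∞)`
and `β = limsup_{t→∞} [f'(t)]⁻` is finite, then there is `T > 0` such that
`y(t) ≤ C (1 + β^{γ/(2-γ)} + f(t)^γ)` for all `t > T`, with
`C = 3 (32(1+c))^{2/(2-γ)}`. -/
theorem stmt16 (c γ : ℝ) (hc : 0 < c) (hγ1 : 1 < γ) (hγ2 : γ < 2)
    (ψ y f : ℝ → ℝ)
    (hψ : Set.InvOn ψ (fun z : ℝ => c * (z + z ^ γ)) (Set.Ici 0) (Set.Ici 0))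
    (hyc : ContinuousOn y (Set.Ici 0))
    (hyd : ∀ t : ℝ, 0 < t → DifferentiableAt ℝ y t)
    (hy0 : ∀ t : ℝ, 0 ≤ t → 0 ≤ y t)
    (hfc : ContinuousOn f (Set.Ici 0))
    (hfd : ∀ t : ℝ, 0 < t → DifferentiableAt ℝ f t)
    (hfd' : ContinuousOn (deriv f) (Set.Ioi 0))
    (hf0 : ∀ t : ℝ, 0 ≤ t → 0 ≤ f t)
    (hode : ∀ t : ℝ, 0 < t → deriv y t ≤ -ψ (y t) + f t)
    (β : ℝ)
    (hβ : limsup (fun t : ℝ => ((max (-(deriv f t)) 0 : ℝ) : EReal)) atTop = (β : EReal)) :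
    ∃ T : ℝ, 0 < T ∧ ∀ t : ℝ, T < t →
      y t ≤ 3 * (32 * (1 + c)) ^ (2 / (2 - γ)) * (1 + β ^ (γ / (2 - γ)) + f t ^ γ) := by
  have hpos : ∀ᶠ t : ℝ in atTop, 0 < t := eventually_gt_atTop 0
  obtain ⟨T, hT⟩ := ((stmt16_general hc hγ1.le hγ2 hψ.1
    (hpos.mono fun t ht => (hyd t ht).hasDerivAt) (hpos.mono fun t ht => (hfd t ht).hasDerivAt)
    (hpos.mono fun t ht => hf0 t ht.le) (hpos.mono hode) hβ.le).and hpos).exists_forall_of_atTop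
  exact ⟨T, (hT T le_rfl).2, fun t ht => (hT t ht.le).1⟩
end

section
/- (Lemma A.3.) Let T ∈ ℝ. Let y, f : [T,∞) → [0,∞) be continuous with y differentiable on (T,∞), and let h, g : [T,∞) → (0,∞) be continuous with g differentiable on (T,∞), such that y'(t) ≤ −h(t)·y(t) + f(t) for all t > T. If ∫_T^∞ h(τ) dτ = ∞ and lim_{t→∞} g'(t)/(g(t)h(t)) = 0, then limsup_{t→∞} (g(t)·y(t)) ≤ limsup_{t→∞} (g(t)·f(t)/h(t)). -/
open Filter
open scoped Topology

/-!
The product `u = g * y` satisfies `u' ≤ -h * ((1 - g' / (g * h)) * u - g * f / h)`. For a real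
`c > limsup (g * f / h)` the second factor is therefore bounded below by some `δ > 0` whenever
`c ≤ u` and `t` is large, so `u' ≤ -δ * h` there. Since `∫ h = ∞`, `u` cannot stay above `c`; and
since `u' < 0` wherever `u = c`, it cannot come back once it is at most `c`.
-/

section DerivativeComparison

variable {u u' : ℝ → ℝ}

lemma tendsto_atBot_of_hasDerivAt_le {v v' : ℝ → ℝ}
    (hu : ∀ᶠ t in atTop, HasDerivAt u (u' t) t) (hv : ∀ᶠ t in atTop, HasDerivAt v (v' t) t)
    (hle : ∀ᶠ t in atTop, u' t ≤ v' t) (hvbot : Tendsto v atTop atBot) :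
    Tendsto u atTop atBot := by
  obtain ⟨a, ha⟩ := eventually_atTop.1 (hu.and (hv.and hle))
  have hsub : ∀ t, a ≤ t → HasDerivAt (fun s => u s - v s) (u' t - v' t) t :=
    fun t ht => (ha t ht).1.sub (ha t ht).2.1
  have hanti : AntitoneOn (fun t => u t - v t) (Set.Ici a) :=
    antitoneOn_of_hasDerivWithinAt_nonpos (convex_Ici a)
      (fun t ht => (hsub t ht).continuousAt.continuousWithinAt)
      (fun t ht => (hsub t (interior_subset ht)).hasDerivWithinAt)
      (fun t ht => sub_nonpos.2 (ha t (interior_subset ht)).2.2)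
  refine tendsto_atBot_mono' atTop ?_ (tendsto_atBot_add_const_left atTop (u a - v a) hvbot)
  filter_upwards [eventually_ge_atTop a] with t ht
  exact sub_le_iff_le_add.1 (hanti Set.self_mem_Ici ht ht)

lemma eventually_le_of_hasDerivAt_le_neg_of_le {h H : ℝ → ℝ} {c : ℝ}
    (hu : ∀ᶠ t in atTop, HasDerivAt u (u' t) t) (hH : ∀ᶠ t in atTop, HasDerivAt H (h t) t)
    (hHtop : Tendsto H atTop atTop) (hpos : ∀ᶠ t in atTop, 0 < h t)
    (hle : ∀ᶠ t in atTop, c ≤ u t → u' t ≤ -h t) :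
    ∀ᶠ t in atTop, u t ≤ c := by
  have hfreq : ∃ᶠ t in atTop, u t ≤ c := fun hgt => by
    have habove : ∀ᶠ t in atTop, c ≤ u t := hgt.mono fun t ht => (not_le.1 ht).le
    have hbot : Tendsto u atTop atBot :=
      tendsto_atBot_of_hasDerivAt_le hu (hH.mono fun t ht => ht.neg)
        ((hle.and habove).mono fun t ht => ht.1 ht.2) (tendsto_neg_atTop_atBot.comp hHtop)
    obtain ⟨t, hlt, hge⟩ := ((hbot.eventually_lt_atBot c).and habove).exists
    exact hlt.not_ge hge
  obtain ⟨a, ha⟩ := eventually_atTop.1 (hu.and (hpos.and hle))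
  obtain ⟨b, hab, hb⟩ := frequently_atTop.1 hfreq a
  have hderiv : ∀ s, b ≤ s → HasDerivAt u (u' s) s := fun s hs => (ha s (hab.trans hs)).1
  have hneg : ∀ s, b ≤ s → u s = c → u' s < 0 := fun s hs hsc => by
    obtain ⟨-, hhs, hles⟩ := ha s (hab.trans hs)
    exact (hles hsc.ge).trans_lt (neg_neg_of_pos hhs)
  filter_upwards [eventually_ge_atTop b] with t ht
  exact image_le_of_deriv_right_lt_deriv_boundary
    (fun s hs => (hderiv s hs.1).continuousAt.continuousWithinAt)
    (fun s hs => (hderiv s hs.1).hasDerivWithinAt) hb (fun s => hasDerivAt_const s c)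
    (fun s hs => hneg s hs.1) (Set.right_mem_Icc.2 ht)

end DerivativeComparison

lemma add_mul_le_neg_mul_of_le_neg_mul_add {K : Type*} [Field K] [LinearOrder K]
    [IsStrictOrderedRing K] {y y' f h g g' : K} (hg : 0 < g) (hh : 0 < h)
    (hode : y' ≤ -h * y + f) :
    g' * y + g * y' ≤ -(h * ((1 - g' / (g * h)) * (g * y) - g * f / h)) :=
  calc
    g' * y + g * y' ≤ g' * y + g * (-h * y + f) := by gcongr
    _ = -(h * ((1 - g' / (g * h)) * (g * y) - g * f / h)) := by field_simp; ring

lemma exists_pos_eventually_le_sub_of_limsup_lt {α : Type*} {l : Filter α} {r φ : α → ℝ} {c : ℝ}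
    (hr : Tendsto r l (𝓝 0)) (hφ : limsup (fun t => (φ t : EReal)) l < c) :
    ∃ δ > 0, ∀ᶠ t in l, ∀ x, c ≤ x → δ ≤ (1 - r t) * x - φ t := by
  obtain ⟨b, hφb, hbc⟩ := EReal.lt_iff_exists_real_btwn.1 hφ
  replace hbc : b < c := EReal.coe_lt_coe_iff.1 hbc
  have hmul : Tendsto (fun t => (1 - r t) * c) l (𝓝 c) := by
    simpa using (hr.const_sub 1).mul_const c
  refine ⟨(c - b) / 2, by linarith, ?_⟩
  filter_upwards [eventually_lt_of_limsup_lt hφb, hr.eventually_lt_const one_pos,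
    hmul.eventually_const_lt (show (b + c) / 2 < c by linarith)] with t hφt hrt hct x hx
  have hmono : (1 - r t) * c ≤ (1 - r t) * x :=
    mul_le_mul_of_nonneg_left hx (sub_nonneg.2 hrt.le)
  linarith [EReal.coe_lt_coe_iff.1 hφt]

lemma hasDerivAt_integral_of_continuousOn_Ici {E : Type*} [NormedAddCommGroup E] [NormedSpace ℝ E]
    [CompleteSpace E] {h : ℝ → E} {a t : ℝ} (hh : ContinuousOn h (Set.Ici a)) (ht : a < t) :
    HasDerivAt (fun s => ∫ τ in a..s, h τ) (h t) t :=
  intervalIntegral.integral_hasDerivAt_right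
    (hh.mono (Set.uIcc_of_le ht.le ▸ Set.Icc_subset_Ici_self)).intervalIntegrable
    ((hh.mono Set.Ioi_subset_Ici_self).stronglyMeasurableAtFilter isOpen_Ioi t ht)
    (hh.continuousAt (Ici_mem_nhds ht))

theorem stmt17_general {y y' f h H g g' : ℝ → ℝ}
    (hy : ∀ᶠ t in atTop, HasDerivAt y (y' t) t) (hg : ∀ᶠ t in atTop, HasDerivAt g (g' t) t)
    (hH : ∀ᶠ t in atTop, HasDerivAt H (h t) t) (hHtop : Tendsto H atTop atTop)
    (hhpos : ∀ᶠ t in atTop, 0 < h t) (hgpos : ∀ᶠ t in atTop, 0 < g t)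
    (hode : ∀ᶠ t in atTop, y' t ≤ -h t * y t + f t)
    (hlim : Tendsto (fun t => g' t / (g t * h t)) atTop (𝓝 0)) :
    limsup (fun t => ((g t * y t : ℝ) : EReal)) atTop ≤
      limsup (fun t => ((g t * f t / h t : ℝ) : EReal)) atTop := by
  refine EReal.le_of_forall_lt_iff_le.1 fun c hc => ?_
  obtain ⟨δ, hδ, hgap⟩ := exists_pos_eventually_le_sub_of_limsup_lt hlim hc
  have hprod : ∀ᶠ t in atTop, HasDerivAt (fun s => g s * y s) (g' t * y t + g t * y' t) t := by
    filter_upwards [hg, hy] with t hgt hyt using hgt.mul hyt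
  have hdecay : ∀ᶠ t in atTop, c ≤ g t * y t → g' t * y t + g t * y' t ≤ -(h t * δ) := by
    filter_upwards [hgap, hhpos, hgpos, hode] with t hgapt hht hgt hodet hct
    exact (add_mul_le_neg_mul_of_le_neg_mul_add hgt hht hodet).trans
      (neg_le_neg (mul_le_mul_of_nonneg_left (hgapt _ hct) hht.le))
  have hle : ∀ᶠ t in atTop, g t * y t ≤ c :=
    eventually_le_of_hasDerivAt_le_neg_of_le hprod (hH.mono fun t ht => ht.mul_const δ)
      (hHtop.atTop_mul_const hδ) (hhpos.mono fun t ht => mul_pos ht hδ) hdecay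
  exact limsup_le_of_le (h := hle.mono fun t ht => EReal.coe_le_coe_iff.2 ht)

/-- Lemma A.3: if `y' ≤ -h·y + f` on `(T,∞)`, `∫_T^∞ h = ∞` and
`g'/(g h) → 0` at infinity, then
`limsup (g·y) ≤ limsup (g·f/h)` (limits superior taken in the extended reals). -/
theorem stmt17 (T : ℝ) (y f h g : ℝ → ℝ)
    (hyc : ContinuousOn y (Set.Ici T))
    (hyd : ∀ t : ℝ, T < t → DifferentiableAt ℝ y t)
    (hy0 : ∀ t : ℝ, T ≤ t → 0 ≤ y t)
    (hfc : ContinuousOn f (Set.Ici T)) (hf0 : ∀ t : ℝ, T ≤ t → 0 ≤ f t)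
    (hhc : ContinuousOn h (Set.Ici T)) (hh0 : ∀ t : ℝ, T ≤ t → 0 < h t)
    (hgc : ContinuousOn g (Set.Ici T)) (hg0 : ∀ t : ℝ, T ≤ t → 0 < g t)
    (hgd : ∀ t : ℝ, T < t → DifferentiableAt ℝ g t)
    (hode : ∀ t : ℝ, T < t → deriv y t ≤ -h t * y t + f t)
    (hint : Tendsto (fun t : ℝ => ∫ τ in T..t, h τ) atTop atTop)
    (hlim : Tendsto (fun t : ℝ => deriv g t / (g t * h t)) atTop (𝓝 0)) :
    limsup (fun t : ℝ => ((g t * y t : ℝ) : EReal)) atTop ≤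
      limsup (fun t : ℝ => ((g t * f t / h t : ℝ) : EReal)) atTop := by
  have hgt := eventually_gt_atTop T
  exact stmt17_general (hgt.mono fun t ht => (hyd t ht).hasDerivAt)
    (hgt.mono fun t ht => (hgd t ht).hasDerivAt)
    (hgt.mono fun _ => hasDerivAt_integral_of_continuousOn_Ici hhc) hint
    (hgt.mono fun t ht => hh0 t ht.le) (hgt.mono fun t ht => hg0 t ht.le) (hgt.mono hode) hlim
end
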